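/- Let g ≥ 2, let Γ be the genus-g surface group — the presented group with generators a₁,b₁,…,a_g,b_g and single relator [a₁,b₁]⋯[a_g,b_g] — with its standard generating set X = {a₁,b₁,…,a_g,b_g}, and let Δ₀ be a finitely generated subgroup of Γ. Then there exist constants C > 0 and D > 0 such that for every γ ∈ Γ with γ ∉ Δ₀ there exist a finite group Q and a homomorphism φ : Γ → Q with φ(γ) ∉ φ(Δ₀) and |Q| ≤ C·‖γ‖_X^D; moreover, the subgroup Λ = Δ₀ ⊔ ker(φ) satisfies: Δ₀ ≤ Λ, γ ∉ Λ, [Γ : Λ] ≤ |Q|, and the index of the normal core of Λ in Γ is at most |Q|. -/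

import Mathlib

open scoped commutatorElement in
/-- The single relator `[a₁,b₁][a₂,b₂]⋯[a_g,b_g]` of the genus-`g` surface group, as an
element of the free group on the `2g` generators `a₁,…,a_g` (indexed by `Sum.inl`) and
`b₁,…,b_g` (indexed by `Sum.inr`). -/
def surfaceRelator (g : ℕ) : FreeGroup (Fin g ⊕ Fin g) :=
  ((List.finRange g).map
    (fun i => ⁅FreeGroup.of (Sum.inl i : Fin g ⊕ Fin g),
               FreeGroup.of (Sum.inr i : Fin g ⊕ Fin g)⁆)).prod

/-- The fundamental group of the closed orientable surface of genus `g`. -/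
def SurfaceGroup (g : ℕ) : Type :=
  PresentedGroup ({surfaceRelator g} : Set (FreeGroup (Fin g ⊕ Fin g)))

noncomputable instance (g : ℕ) : Group (SurfaceGroup g) := by
  unfold SurfaceGroup; infer_instance

/-- The standard generating set `{a₁,b₁,…,a_g,b_g}` of the genus-`g` surface group. -/
def surfaceGens (g : ℕ) : Set (SurfaceGroup g) :=
  Set.range (PresentedGroup.of :
    (Fin g ⊕ Fin g) → PresentedGroup ({surfaceRelator g} : Set (FreeGroup (Fin g ⊕ Fin g))))

/-- The word norm of `γ` with respect to a generating set `X`: the least `m` such that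
`γ` is a product of `m` elements of `X ∪ X⁻¹`. -/
noncomputable def wordNorm {Γ : Type*} [Group Γ] (X : Set Γ) (γ : Γ) : ℕ :=
  sInf {m | ∃ l : List Γ, l.length = m ∧ (∀ x ∈ l, x ∈ X ∪ X⁻¹) ∧ l.prod = γ}

/-!
The surface group embeds in the reflection group `W` of the right-angled `(2g + 2)`-gon as a group
of products of pairs of reflections. The embedding is injective because `W` in turn acts on the
surface group by affine maps (translations composed with involutive automorphisms), which restricts
to the action by translations.

Finitely generated subgroups `H` of `W` are virtual retracts, by Scott's argument. The tessellation
of the hyperbolic plane by right-angled polygons, modulo `H`, has a finite union of tiles which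
carries `H`. Filling in the missing tile at each concave corner, and folding, makes this region
locally convex. The process stops: a step shortens the boundary or adds a tile glued along two sides
only, and since tiles have at least five sides, a boundary of given length cannot allow this
forever. Reflecting in the sides of the region gives a subgroup `K` of finite index which contains
`H`, and forgetting these reflections gives a retraction of `K` to `H` which does not increase word
length.

So membership in `H` is the equality of the two integral matrices of `k` and `r k` in the geometric
representation, whose entries grow at most exponentially in the word length. If they differ, their
difference is not divisible by some integer `m` linear in the word length, because
`lcm (1, …, n) ≥ 2 ^ n / (n + 1)`. Reducing both matrices modulo `m` gives the finite quotient.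
-/

namespace EffectiveSeparability

section WordNorm

variable {Γ : Type*} [Group Γ] {X : Set Γ}

theorem exists_list_length_eq_wordNorm (hX : Subgroup.closure X = ⊤) (γ : Γ) :
    ∃ l : List Γ, l.length = wordNorm X γ ∧ (∀ x ∈ l, x ∈ X ∪ X⁻¹) ∧ l.prod = γ := by
  have hγ : γ ∈ (Subgroup.closure X).toSubmonoid := by simp [hX]
  rw [Subgroup.closure_toSubmonoid] at hγ
  obtain ⟨l, hl, hprod⟩ := Submonoid.exists_list_of_mem_closure hγ
  exact Nat.sInf_mem (s := {m | ∃ l : List Γ, l.length = m ∧ (∀ x ∈ l, x ∈ X ∪ X⁻¹) ∧ l.prod = γ})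
    ⟨l.length, l, rfl, hl, hprod⟩

theorem wordNorm_pos (hX : Subgroup.closure X = ⊤) {γ : Γ} (hγ : γ ≠ 1) : 0 < wordNorm X γ := by
  obtain ⟨l, hl, -, rfl⟩ := exists_list_length_eq_wordNorm hX γ
  rw [← hl, List.length_pos_iff]
  rintro rfl
  exact hγ List.prod_nil

theorem le_mul_wordNorm_of_subadditive (hX : Subgroup.closure X = ⊤) {ℓ : Γ → ℕ} {c : ℕ}
    (hone : ℓ 1 = 0) (hmul : ∀ x y, ℓ (x * y) ≤ ℓ x + ℓ y) (hc : ∀ x ∈ X ∪ X⁻¹, ℓ x ≤ c) (γ : Γ) :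
    ℓ γ ≤ c * wordNorm X γ := by
  obtain ⟨l, hl, hlX, rfl⟩ := exists_list_length_eq_wordNorm hX γ
  rw [← hl]
  clear hl
  induction l with
  | nil => simp [hone]
  | cons x l ih =>
    rw [List.forall_mem_cons] at hlX
    calc ℓ (x :: l).prod ≤ ℓ x + ℓ l.prod := by rw [List.prod_cons]; exact hmul _ _
      _ ≤ c + c * l.length := add_le_add (hc x hlX.1) (ih hlX.2)
      _ = c * (x :: l).length := by rw [List.length_cons]; ring

end WordNorm

theorem two_mul_add_three_le_two_pow (k : ℕ) : 2 * k + 3 ≤ 2 ^ (k + 2) := by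
  induction k with
  | zero => norm_num
  | succ k ih => rw [pow_succ]; omega

theorem exists_le_not_dvd_of_natAbs_lt_two_pow {z : ℤ} (hz : z ≠ 0) {k : ℕ}
    (hzk : z.natAbs < 2 ^ k) : ∃ m : ℕ, 1 ≤ m ∧ m ≤ 2 * k + 2 ∧ ¬(m : ℤ) ∣ z := by
  by_contra! hdvd
  have hlcm : Nat.lcmUpto (2 * k + 2) ∣ z.natAbs := Finset.lcm_dvd fun m hm => by
    rw [Finset.mem_Icc] at hm
    exact Int.natCast_dvd.mp (hdvd m hm.1 hm.2)
  have hlt : Nat.lcmUpto (2 * k + 2) < 2 ^ k :=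
    (Nat.le_of_dvd (Int.natAbs_pos.mpr hz) hlcm).trans_lt hzk
  refine lt_irrefl (2 ^ (2 * k + 2)) ?_
  calc 2 ^ (2 * k + 2) ≤ (2 * k + 3) * Nat.lcmUpto (2 * k + 2) :=
        Chebyshev.two_pow_le_mul_lcmUpto (2 * k + 2)
    _ ≤ 2 ^ (k + 2) * Nat.lcmUpto (2 * k + 2) := by
        gcongr; exact two_mul_add_three_le_two_pow k
    _ < 2 ^ (k + 2) * 2 ^ k := by gcongr
    _ = 2 ^ (2 * k + 2) := by ring

section FiniteIndex

variable {Γ : Type*} [Group Γ]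

theorem fg_map {Γ' : Type*} [Group Γ'] (f : Γ →* Γ') {Δ : Subgroup Γ} (hΔ : Δ.FG) :
    (Δ.map f).FG :=
  (Subgroup.fg_iff_submonoid_fg _).mpr (((Subgroup.fg_iff_submonoid_fg Δ).mp hΔ).map f)

theorem finiteIndex_comap {Γ' : Type*} [Group Γ'] (f : Γ →* Γ') (K : Subgroup Γ')
    [K.FiniteIndex] : (K.comap f).FiniteIndex :=
  ⟨by rw [Subgroup.index_comap]; exact (K.subgroupOf f.range).index_ne_zero_of_finite⟩

theorem finiteIndex_ker_of_finite {P : Type*} [Monoid P] [Finite P] (ψ : Γ →* P) :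
    ψ.ker.FiniteIndex := by
  rw [← MonoidHom.ker_toHomUnits]
  infer_instance

theorem index_ker_le_card {P : Type*} [Monoid P] [Finite P] (ψ : Γ →* P) :
    ψ.ker.index ≤ Nat.card P := by
  rw [← MonoidHom.ker_toHomUnits, Subgroup.index_ker]
  exact (Nat.card_le_card_of_injective _ Subtype.val_injective).trans
    (Nat.card_le_card_of_injective _ Units.val_injective)

theorem normalCore_eq_iInf_conj_out {K M : Subgroup Γ} (hKM : K ≤ Subgroup.normalizer M) :
    M.normalCore = ⨅ q : Γ ⧸ K, M.map (MulAut.conj q.out).toMonoidHom := by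
  rw [Subgroup.normalCore_eq_iInf_map_conj]
  refine le_antisymm (le_iInf fun q => iInf_le _ q.out) (le_iInf fun x => ?_)
  refine (iInf_le _ (x : Γ ⧸ K)).trans ?_
  obtain ⟨k, hk⟩ := QuotientGroup.mk_out_eq_mul K x
  rintro _ ⟨y, hy, rfl⟩
  refine ⟨k * y * (k : Γ)⁻¹, (Subgroup.mem_normalizer_iff.mp (hKM k.2) y).mp hy, ?_⟩
  simp [hk, mul_assoc]

theorem index_normalCore_le_pow {K M : Subgroup Γ} [K.FiniteIndex]
    (hKM : K ≤ Subgroup.normalizer M) : M.normalCore.index ≤ M.index ^ K.index := by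
  have : Fintype (Γ ⧸ K) := Fintype.ofFinite _
  calc M.normalCore.index
      ≤ ∏ q : Γ ⧸ K, (M.map (MulAut.conj q.out).toMonoidHom).index := by
        rw [normalCore_eq_iInf_conj_out hKM]; exact Subgroup.index_iInf_le _
    _ = ∏ _q : Γ ⧸ K, M.index :=
        Finset.prod_congr rfl fun q _ => Subgroup.index_map_equiv _ (MulAut.conj q.out)
    _ = M.index ^ K.index := by
        rw [Finset.prod_const, Finset.card_univ, Subgroup.index_eq_card K, Nat.card_eq_fintype_card]

end FiniteIndex

section Congruence

theorem natCard_matrix_zmod (ι : Type*) [Fintype ι] (m : ℕ) :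
    Nat.card (Matrix ι ι (ZMod m)) = m ^ Fintype.card ι ^ 2 := by
  rw [Matrix, Nat.card_fun, Nat.card_fun, Nat.card_zmod, Nat.card_eq_fintype_card, ← pow_mul, sq]

variable {Γ : Type*} [Group Γ] {ι : Type*} [Fintype ι] [DecidableEq ι]

/-- The kernel of the reduction modulo `m` of an integral representation `ρ`. -/
def congruenceKernel (ρ : Γ →* Matrix ι ι ℤ) (m : ℕ) : Subgroup Γ :=
  ((Int.castRingHom (ZMod m)).mapMatrix.toMonoidHom.comp ρ).ker

instance (ρ : Γ →* Matrix ι ι ℤ) (m : ℕ) : (congruenceKernel ρ m).Normal :=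
  MonoidHom.normal_ker _

theorem intCast_apply_eq_of_inv_mul_mem_congruenceKernel {ρ : Γ →* Matrix ι ι ℤ} {m : ℕ} {x y : Γ}
    (hxy : x⁻¹ * y ∈ congruenceKernel ρ m) (i j : ι) :
    (ρ x i j : ZMod m) = (ρ y i j : ZMod m) := by
  set φ := (Int.castRingHom (ZMod m)).mapMatrix.toMonoidHom.comp ρ
  have hφ : φ y = φ x :=
    calc φ y = φ x * φ (x⁻¹ * y) := by rw [← map_mul, mul_inv_cancel_left]
      _ = φ x := by rw [show φ (x⁻¹ * y) = 1 from hxy, mul_one]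
  exact (congrFun₂ hφ i j).symm

instance (ρ : Γ →* Matrix ι ι ℤ) (m : ℕ) [NeZero m] : (congruenceKernel ρ m).FiniteIndex :=
  have : Finite (Matrix ι ι (ZMod m)) := inferInstanceAs (Finite (ι → ι → ZMod m))
  finiteIndex_ker_of_finite _

theorem index_congruenceKernel_le (ρ : Γ →* Matrix ι ι ℤ) (m : ℕ) [NeZero m] :
    (congruenceKernel ρ m).index ≤ m ^ Fintype.card ι ^ 2 := by
  have : Finite (Matrix ι ι (ZMod m)) := inferInstanceAs (Finite (ι → ι → ZMod m))
  rw [← natCard_matrix_zmod]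
  exact index_ker_le_card _

variable {K : Subgroup Γ} (ρ₁ ρ₂ : K →* Matrix ι ι ℤ) (m : ℕ)

/-- The elements of `K` acting trivially modulo `m` under both representations. -/
def jointCongruenceSubgroup : Subgroup Γ :=
  (congruenceKernel ρ₁ m ⊓ congruenceKernel ρ₂ m).map K.subtype

theorem le_normalizer_jointCongruenceSubgroup :
    K ≤ Subgroup.normalizer (jointCongruenceSubgroup ρ₁ ρ₂ m) := by
  have hnorm := Subgroup.le_normalizer_map (H := congruenceKernel ρ₁ m ⊓ congruenceKernel ρ₂ m)
    K.subtype
  rwa [Subgroup.normalizer_eq_top, ← MonoidHom.range_eq_map, Subgroup.range_subtype] at hnorm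

theorem jointCongruenceSubgroup_le : jointCongruenceSubgroup ρ₁ ρ₂ m ≤ K :=
  Subgroup.map_subtype_le _

theorem index_jointCongruenceSubgroup_le [NeZero m] :
    (jointCongruenceSubgroup ρ₁ ρ₂ m).index ≤ m ^ (2 * Fintype.card ι ^ 2) * K.index := by
  rw [jointCongruenceSubgroup, Subgroup.index_map_subtype]
  gcongr
  calc (congruenceKernel ρ₁ m ⊓ congruenceKernel ρ₂ m).index
      ≤ (congruenceKernel ρ₁ m).index * (congruenceKernel ρ₂ m).index := Subgroup.index_inf_le ..
    _ ≤ m ^ Fintype.card ι ^ 2 * m ^ Fintype.card ι ^ 2 := by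
        gcongr <;> exact index_congruenceKernel_le _ m
    _ = m ^ (2 * Fintype.card ι ^ 2) := by rw [← pow_add, two_mul]

instance [K.FiniteIndex] [NeZero m] : (jointCongruenceSubgroup ρ₁ ρ₂ m).FiniteIndex := by
  constructor
  rw [jointCongruenceSubgroup, Subgroup.index_map_subtype]
  exact mul_ne_zero Subgroup.FiniteIndex.index_ne_zero Subgroup.FiniteIndex.index_ne_zero

theorem index_normalCore_jointCongruenceSubgroup_le [K.FiniteIndex] [NeZero m] :
    (jointCongruenceSubgroup ρ₁ ρ₂ m).normalCore.index ≤
      (m ^ (2 * Fintype.card ι ^ 2) * K.index) ^ K.index :=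
  (index_normalCore_le_pow (le_normalizer_jointCongruenceSubgroup ρ₁ ρ₂ m)).trans
    (Nat.pow_le_pow_left (index_jointCongruenceSubgroup_le ρ₁ ρ₂ m) _)

variable {ρ₁ ρ₂ m}

theorem dvd_sub_of_eq_mul_mem_jointCongruenceSubgroup {k δ : K} (hδ : ρ₁ δ = ρ₂ δ) {x : Γ}
    (hx : x ∈ jointCongruenceSubgroup ρ₁ ρ₂ m) (hk : (k : Γ) = δ * x) (i j : ι) :
    (m : ℤ) ∣ ρ₁ k i j - ρ₂ k i j := by
  obtain ⟨y, ⟨hy₁, hy₂⟩, rfl⟩ := hx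
  obtain rfl : δ⁻¹ * k = y := Subtype.ext (by simp [hk])
  rw [← ZMod.intCast_eq_intCast_iff_dvd_sub,
    ← intCast_apply_eq_of_inv_mul_mem_congruenceKernel hy₁,
    ← intCast_apply_eq_of_inv_mul_mem_congruenceKernel hy₂, hδ]

theorem notMem_sup_normalCore_jointCongruenceSubgroup {Δ : Subgroup Γ} (hΔK : Δ ≤ K)
    (hΔ : ∀ δ : K, (δ : Γ) ∈ Δ → ρ₁ δ = ρ₂ δ) {k : K} {i j : ι}
    (hk : ¬(m : ℤ) ∣ ρ₁ k i j - ρ₂ k i j) :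
    (k : Γ) ∉ Δ ⊔ (jointCongruenceSubgroup ρ₁ ρ₂ m).normalCore := by
  rw [Subgroup.mem_sup_of_normal_right]
  rintro ⟨δ, hδ, x, hx, hδx⟩
  exact hk (dvd_sub_of_eq_mul_mem_jointCongruenceSubgroup (δ := ⟨δ, hΔK hδ⟩) (hΔ _ hδ)
    (Subgroup.normalCore_le _ hx) hδx.symm i j)

end Congruence

section PolynomialSeparability

variable {Γ : Type*} [Group Γ]

/-- A subgroup `Δ` is polynomially separable with respect to `X` if every `γ ∉ Δ` is kept out of
`Δ` by a normal subgroup whose index is at most a fixed polynomial in the word norm of `γ`. -/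
def IsPolynomiallySeparable (X : Set Γ) (Δ : Subgroup Γ) : Prop :=
  ∃ C D : ℕ, 0 < C ∧ 0 < D ∧ ∀ γ ∉ Δ, ∃ N : Subgroup Γ, N.Normal ∧ N.FiniteIndex ∧
    γ ∉ Δ ⊔ N ∧ N.index ≤ C * wordNorm X γ ^ D

theorem exists_le_mul_not_dvd_sub {a b : ℤ} (hab : a ≠ b) {c n : ℕ} (hn : 0 < n)
    (ha : |a| ≤ 2 ^ (c * n)) (hb : |b| ≤ 2 ^ (c * n)) :
    ∃ m : ℕ, 1 ≤ m ∧ m ≤ (2 * c + 6) * n ∧ ¬(m : ℤ) ∣ a - b := by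
  have habs : |a - b| < 2 ^ (c * n + 2) :=
    calc |a - b| ≤ |a| + |b| := abs_sub a b
      _ ≤ 2 ^ (c * n) + 2 ^ (c * n) := add_le_add ha hb
      _ < 2 ^ (c * n + 2) := by
        have : (0 : ℤ) < 2 ^ (c * n) := by positivity
        rw [pow_add]; linarith
  have hlt : (a - b).natAbs < 2 ^ (c * n + 2) := by zify; exact habs
  obtain ⟨m, hm, hmle, hdvd⟩ := exists_le_not_dvd_of_natAbs_lt_two_pow (sub_ne_zero.mpr hab) hlt
  exact ⟨m, hm, hmle.trans (by nlinarith), hdvd⟩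

variable {ι : Type*} [Fintype ι] [DecidableEq ι] {X : Set Γ} {Δ K : Subgroup Γ}
  {ρ₁ ρ₂ : K →* Matrix ι ι ℤ} {c : ℕ}

theorem exists_modulus_notMem_sup_normalCore (hX : Subgroup.closure X = ⊤) (hΔK : Δ ≤ K)
    (hΔ : ∀ k : K, (k : Γ) ∈ Δ ↔ ρ₁ k = ρ₂ k)
    (hρ₁ : ∀ k i j, |ρ₁ k i j| ≤ 2 ^ (c * wordNorm X (k : Γ)))
    (hρ₂ : ∀ k i j, |ρ₂ k i j| ≤ 2 ^ (c * wordNorm X (k : Γ))) {γ : Γ} (hγ : γ ∉ Δ) :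
    ∃ m : ℕ, 1 ≤ m ∧ m ≤ (2 * c + 6) * wordNorm X γ ∧
      γ ∉ Δ ⊔ (jointCongruenceSubgroup ρ₁ ρ₂ m).normalCore := by
  have hpos : 0 < wordNorm X γ := wordNorm_pos hX fun h => hγ (h ▸ Δ.one_mem)
  by_cases hγK : γ ∈ K
  · obtain ⟨i, j, hij⟩ : ∃ i j, ρ₁ ⟨γ, hγK⟩ i j ≠ ρ₂ ⟨γ, hγK⟩ i j := by
      by_contra! heq
      exact hγ ((hΔ ⟨γ, hγK⟩).mpr (Matrix.ext heq))
    obtain ⟨m, hm, hmle, hdvd⟩ := exists_le_mul_not_dvd_sub hij hpos (hρ₁ _ i j) (hρ₂ _ i j)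
    exact ⟨m, hm, hmle, notMem_sup_normalCore_jointCongruenceSubgroup hΔK
      (fun δ hδ => (hΔ δ).mp hδ) hdvd⟩
  · refine ⟨1, le_rfl, by nlinarith, fun hsup => hγK (sup_le hΔK ?_ hsup)⟩
    exact (Subgroup.normalCore_le _).trans (jointCongruenceSubgroup_le ρ₁ ρ₂ 1)

theorem isPolynomiallySeparable_of_eq_iff [K.FiniteIndex] (hX : Subgroup.closure X = ⊤)
    (hΔK : Δ ≤ K) (hΔ : ∀ k : K, (k : Γ) ∈ Δ ↔ ρ₁ k = ρ₂ k)
    (hρ₁ : ∀ k i j, |ρ₁ k i j| ≤ 2 ^ (c * wordNorm X (k : Γ)))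
    (hρ₂ : ∀ k i j, |ρ₂ k i j| ≤ 2 ^ (c * wordNorm X (k : Γ))) :
    IsPolynomiallySeparable X Δ := by
  set e := 2 * Fintype.card ι ^ 2
  have hK : 0 < K.index := Nat.pos_of_ne_zero Subgroup.FiniteIndex.index_ne_zero
  refine ⟨((2 * c + 6) ^ e * K.index) ^ K.index, e * K.index + 1, by positivity, by positivity, ?_⟩
  intro γ hγ
  obtain ⟨m, hm, hmle, hnot⟩ := exists_modulus_notMem_sup_normalCore hX hΔK hΔ hρ₁ hρ₂ hγ
  have : NeZero m := ⟨by omega⟩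
  refine ⟨_, Subgroup.normalCore_normal _, inferInstance, hnot, ?_⟩
  calc (jointCongruenceSubgroup ρ₁ ρ₂ m).normalCore.index
      ≤ (m ^ e * K.index) ^ K.index := index_normalCore_jointCongruenceSubgroup_le ρ₁ ρ₂ m
    _ ≤ (((2 * c + 6) * wordNorm X γ) ^ e * K.index) ^ K.index := by gcongr
    _ = ((2 * c + 6) ^ e * K.index) ^ K.index * wordNorm X γ ^ (e * K.index) := by
        rw [mul_pow (2 * c + 6), mul_right_comm, mul_pow _ (_ ^ e), ← pow_mul]
    _ ≤ ((2 * c + 6) ^ e * K.index) ^ K.index * wordNorm X γ ^ (e * K.index + 1) := by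
        gcongr
        · exact wordNorm_pos hX fun h => hγ (h ▸ Δ.one_mem)
        · omega

theorem notMem_map_mk'_of_notMem_sup {N : Subgroup Γ} [N.Normal] {γ : Γ} (hγ : γ ∉ Δ ⊔ N) :
    QuotientGroup.mk' N γ ∉ Δ.map (QuotientGroup.mk' N) := by
  rwa [← Subgroup.mem_comap, Subgroup.comap_map_eq, QuotientGroup.ker_mk']

end PolynomialSeparability

section RightAngledCoxeterGroup

variable {B : Type*} (G : SimpleGraph B)

open Classical in
/-- The Coxeter matrix of the right-angled Coxeter group of `G`: adjacent generators commute, and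
non-adjacent ones (entry `0`, which stands for `∞`) satisfy no relation. -/
noncomputable def rightAngledCoxeterMatrix : CoxeterMatrix B where
  M s t := if s = t then 1 else if G.Adj s t then 2 else 0
  isSymm := Matrix.IsSymm.ext fun s t => by simp only [eq_comm, G.adj_comm]
  diagonal := by simp
  off_diagonal s t hst := by
    rw [if_neg hst]
    split_ifs <;> norm_num

/-- The right-angled Coxeter group of the graph `G`. -/
abbrev RightAngledCoxeterGroup : Type _ := (rightAngledCoxeterMatrix G).Group

namespace RightAngledCoxeterGroup

/-- The standard Coxeter system of a right-angled Coxeter group. -/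
noncomputable abbrev system : CoxeterSystem (rightAngledCoxeterMatrix G)
    (RightAngledCoxeterGroup G) :=
  (rightAngledCoxeterMatrix G).toCoxeterSystem

variable {G}

open Classical in
theorem isLiftable_of_commute {M : Type*} [Monoid M] {f : B → M} (hsq : ∀ s, f s * f s = 1)
    (hcomm : ∀ s t, G.Adj s t → Commute (f s) (f t)) :
    (rightAngledCoxeterMatrix G).IsLiftable f := by
  intro s t
  change (f s * f t) ^ (if s = t then 1 else if G.Adj s t then 2 else 0) = 1
  split_ifs with hst hadj
  · rw [pow_one, hst, hsq]
  · rw [(hcomm s t hadj).mul_pow, sq, sq, hsq, hsq, one_mul]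
  · rw [pow_zero]

open Classical in
theorem simple_commute {s t : B} (hst : G.Adj s t) :
    Commute ((system G).simple s) ((system G).simple t) := by
  have hpow := (system G).simple_mul_simple_pow s t
  have hentry : rightAngledCoxeterMatrix G s t = 2 := by
    change (if s = t then 1 else if G.Adj s t then 2 else 0) = 2
    rw [if_neg hst.ne, if_pos hst]
  rw [hentry, sq] at hpow
  simpa only [mul_inv_rev, (system G).inv_simple, commute_iff_eq] using
    eq_inv_of_mul_eq_one_left hpow

theorem not_isRightDescent_mul_simple_of_adj {w : RightAngledCoxeterGroup G} {s t : B}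
    (hst : G.Adj s t) (ht : (system G).IsRightDescent w t) (hs : ¬(system G).IsRightDescent w s) :
    ¬(system G).IsRightDescent (w * (system G).simple t) s := by
  intro hdesc
  have hcomm : w * (system G).simple s =
      w * (system G).simple t * (system G).simple s * (system G).simple t := by
    rw [mul_assoc (w * (system G).simple t), (simple_commute hst).eq, ← mul_assoc,
      (system G).simple_mul_simple_cancel_right]
  have hlen := (system G).length_mul_le (w * (system G).simple t * (system G).simple s)
    ((system G).simple t)
  rw [← hcomm, (system G).length_simple] at hlen
  have := (system G).isRightDescent_iff.mp hdesc
  have := (system G).isRightDescent_iff.mp ht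
  have := (system G).not_isRightDescent_iff.mp hs
  omega

end RightAngledCoxeterGroup

end RightAngledCoxeterGroup

section GeometricRepresentation

open RightAngledCoxeterGroup

variable {B : Type*} (G : SimpleGraph B)

open Classical in
/-- The coefficient `-2⟨e_s, e_t⟩` by which the reflection in `e_s` moves `e_t`, where the bilinear
form of the geometric representation is `1` on the diagonal, `0` on edges and `-1` elsewhere. -/
noncomputable def reflectionCoeff (s t : B) : ℤ := if t = s then -2 else if G.Adj s t then 0 else 2

variable {G} in
theorem reflectionCoeff_of_adj {s t : B} (hst : G.Adj s t) : reflectionCoeff G s t = 0 := by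
  rw [reflectionCoeff, if_neg hst.ne', if_pos hst]

variable {G} in
theorem reflectionCoeff_of_not_adj {s t : B} (hne : t ≠ s) (hst : ¬G.Adj s t) :
    reflectionCoeff G s t = 2 := by
  rw [reflectionCoeff, if_neg hne, if_neg hst]

theorem reflectionCoeff_self (s : B) : reflectionCoeff G s s = -2 := if_pos rfl

theorem abs_reflectionCoeff_le (s t : B) : |reflectionCoeff G s t| ≤ 2 := by
  unfold reflectionCoeff
  split_ifs <;> norm_num

variable [DecidableEq B]

/-- The matrix of the reflection `e_t ↦ e_t - 2⟨e_s, e_t⟩ e_s`. -/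
noncomputable def reflectionMatrix (s : B) : Matrix B B ℤ :=
  1 + Matrix.vecMulVec (Pi.single s 1) (reflectionCoeff G s)

theorem reflectionMatrix_apply (s i j : B) :
    reflectionMatrix G s i j =
      (1 : Matrix B B ℤ) i j + (1 : Matrix B B ℤ) i s * reflectionCoeff G s j := by
  rw [reflectionMatrix, Matrix.add_apply, Matrix.vecMulVec_apply, Pi.single_apply,
    Matrix.one_apply (j := s)]

variable [Fintype B]

theorem mul_reflectionMatrix_apply (A : Matrix B B ℤ) (s i j : B) :
    (A * reflectionMatrix G s) i j = A i j + A i s * reflectionCoeff G s j := by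
  rw [reflectionMatrix, mul_add, mul_one, Matrix.mul_vecMulVec, Matrix.mulVec_single_one]
  rfl

theorem reflectionMatrix_isLiftable :
    (rightAngledCoxeterMatrix G).IsLiftable (reflectionMatrix G) := by
  refine isLiftable_of_commute (fun s => ?_) fun s t hst => ?_ <;> ext i j
  · rw [mul_reflectionMatrix_apply, reflectionMatrix_apply, reflectionMatrix_apply,
      reflectionCoeff_self]
    ring
  · simp only [mul_reflectionMatrix_apply, reflectionMatrix_apply, reflectionCoeff_of_adj hst,
      reflectionCoeff_of_adj hst.symm]
    ring

/-- The geometric representation of a right-angled Coxeter group, over the integers. -/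
noncomputable def geometricRep : RightAngledCoxeterGroup G →* Matrix B B ℤ :=
  (system G).lift ⟨reflectionMatrix G, reflectionMatrix_isLiftable G⟩

variable {G}

theorem geometricRep_mul_simple (w : RightAngledCoxeterGroup G) (t i j : B) :
    geometricRep G (w * (system G).simple t) i j =
      geometricRep G w i j + geometricRep G w i t * reflectionCoeff G t j := by
  rw [map_mul, geometricRep, (system G).lift_apply_simple, mul_reflectionMatrix_apply]

theorem geometricRep_mul_simple_self (w : RightAngledCoxeterGroup G) (i t : B) :
    geometricRep G (w * (system G).simple t) i t = -geometricRep G w i t := by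
  rw [geometricRep_mul_simple, reflectionCoeff_self]
  ring

/-- The sign conditions on the `i`-th row of `geometricRep G w` that propagate along reduced words:
non-descents have nonnegative coordinates, and a descent does not outweigh a non-descent generating
an infinite dihedral group with it. -/
def IsRowPositive (w : RightAngledCoxeterGroup G) (i : B) : Prop :=
  ∀ s, ¬(system G).IsRightDescent w s → 0 ≤ geometricRep G w i s ∧
    ∀ t, t ≠ s → ¬G.Adj s t → (system G).IsRightDescent w t →
      0 ≤ geometricRep G w i s + geometricRep G w i t

theorem isRowPositive_one (i : B) : IsRowPositive (1 : RightAngledCoxeterGroup G) i := by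
  refine fun s _ => ⟨?_, fun t _ _ ht => ?_⟩
  · rw [map_one, Matrix.one_apply]
    split_ifs <;> norm_num
  · have := (system G).isRightDescent_iff.mp ht
    simp at this

theorem IsRowPositive.add_nonneg {w : RightAngledCoxeterGroup G} {i s t : B}
    (h : IsRowPositive (w * (system G).simple t) i) (ht : (system G).IsRightDescent w t)
    (hts : t ≠ s) (hst : ¬G.Adj s t) :
    0 ≤ geometricRep G w i s + geometricRep G w i t := by
  have hwt := (system G).isRightDescent_iff_not_isRightDescent_mul.mp ht
  have hs := geometricRep_mul_simple w t i s
  rw [reflectionCoeff_of_not_adj hts.symm fun h => hst h.symm] at hs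
  have ht' := geometricRep_mul_simple_self w i t
  by_cases hws : (system G).IsRightDescent (w * (system G).simple t) s
  · have := (h t hwt).2 s hts.symm (fun h => hst h.symm) hws
    have := (h t hwt).1
    omega
  · have := (h s hws).1
    have := (h t hwt).1
    omega

theorem isRowPositive (w : RightAngledCoxeterGroup G) (i : B) : IsRowPositive w i := by
  induction hn : (system G).length w using Nat.strong_induction_on generalizing w with
  | _ n ih =>
    by_cases hw : w = 1
    · exact hw ▸ isRowPositive_one i
    have ih_mul : ∀ t, (system G).IsRightDescent w t →
        IsRowPositive (w * (system G).simple t) i := fun t ht =>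
      ih _ (hn ▸ ht) _ rfl
    refine fun s hs => ⟨?_, fun t hts hst ht => (ih_mul t ht).add_nonneg ht hts hst⟩
    obtain ⟨t, ht⟩ := (system G).exists_rightDescent_of_ne_one hw
    have hts : t ≠ s := by rintro rfl; exact hs ht
    by_cases hst : G.Adj s t
    · have hnonneg := (ih_mul t ht s (not_isRightDescent_mul_simple_of_adj hst ht hs)).1
      rwa [geometricRep_mul_simple, reflectionCoeff_of_adj hst.symm, mul_zero, add_zero] at hnonneg
    · have hsum := (ih_mul t ht).add_nonneg ht hts hst
      have hnonneg :=
        (ih_mul t ht t ((system G).isRightDescent_iff_not_isRightDescent_mul.mp ht)).1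
      rw [geometricRep_mul_simple_self] at hnonneg
      omega

theorem geometricRep_apply_nonpos {w : RightAngledCoxeterGroup G} {s : B}
    (hs : (system G).IsRightDescent w s) (i : B) : geometricRep G w i s ≤ 0 := by
  have hnonneg := (isRowPositive (w * (system G).simple s) i s
    ((system G).isRightDescent_iff_not_isRightDescent_mul.mp hs)).1
  rw [geometricRep_mul_simple_self] at hnonneg
  exact neg_nonneg.mp hnonneg

theorem geometricRep_injective : Function.Injective (geometricRep G) := by
  have eq_one : ∀ w, geometricRep G w = 1 → w = 1 := by
    intro w hw
    by_contra hne
    obtain ⟨s, hs⟩ := (system G).exists_rightDescent_of_ne_one hne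
    have := geometricRep_apply_nonpos hs s
    rw [hw, Matrix.one_apply_eq] at this
    omega
  intro w w' h
  refine inv_mul_eq_one.mp (eq_one _ ?_)
  rw [map_mul, ← h, ← map_mul, inv_mul_cancel, map_one]

theorem abs_geometricRep_mul_simple_le {w : RightAngledCoxeterGroup G} {i : B} {b : ℤ}
    (hb : ∀ j, |geometricRep G w i j| ≤ b) (t j : B) :
    |geometricRep G (w * (system G).simple t) i j| ≤ b * 3 := by
  rw [geometricRep_mul_simple]
  calc |geometricRep G w i j + geometricRep G w i t * reflectionCoeff G t j|
      ≤ |geometricRep G w i j| + |geometricRep G w i t| * |reflectionCoeff G t j| := by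
        rw [← abs_mul]; exact abs_add_le _ _
    _ ≤ b + b * 2 := by
        have := (abs_nonneg _).trans (hb t)
        gcongr
        exacts [hb j, hb t, abs_reflectionCoeff_le G t j]
    _ = b * 3 := by ring

theorem abs_geometricRep_apply_le (w : RightAngledCoxeterGroup G) (i j : B) :
    |geometricRep G w i j| ≤ 3 ^ (system G).length w := by
  obtain ⟨l, hl, rfl⟩ := (system G).exists_isReduced w
  rw [hl]
  clear hl
  induction l using List.reverseRecOn generalizing j with
  | nil =>
    rw [(system G).wordProd_nil, map_one, Matrix.one_apply]
    split_ifs <;> simp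
  | append_singleton l t ih =>
    rw [(system G).wordProd_append, (system G).wordProd_singleton, List.length_append,
      List.length_singleton, pow_succ]
    exact abs_geometricRep_mul_simple_le ih t j

end GeometricRepresentation

section LabelledGraph

variable {B V V' : Type*}

/-- A graph with vertex set `V` and edges labelled in `B` is encoded by its edge relations
`E s v u`; such a graph is folded if a vertex has at most one edge of each label. -/
def IsFolded (E : B → V → V → Prop) : Prop :=
  ∀ ⦃s v u u'⦄, E s v u → E s v u' → u = u'

/-- The vertex `v` has an edge labelled `s`. -/
def HasDart (E : B → V → V → Prop) (s : B) (v : V) : Prop :=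
  ∃ u, E s v u

/-- The pairs of a vertex and the label of an edge at it. -/
def darts (E : B → V → V → Prop) : Set (V × B) :=
  {d | HasDart E d.2 d.1}

/-- A square with sides labelled alternately `s` and `t`, whose corner `v` is opposite to `x`. -/
structure IsSquare (E : B → V → V → Prop) (s t : B) (v a c x : V) : Prop where
  left : E s v a
  bottom : E t v c
  top : E t a x
  right : E s c x

/-- The vertex `v` is a corner of a square with sides labelled `s` and `t`. -/
def HasSquare (E : B → V → V → Prop) (s t : B) (v : V) : Prop :=
  ∃ a c x, IsSquare E s t v a c x

/-- Any two edges at a common vertex with labels adjacent in `G` span a square. -/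
def IsLocallyComplete (G : SimpleGraph B) (E : B → V → V → Prop) : Prop :=
  ∀ ⦃s t v⦄, G.Adj s t → HasDart E s v → HasDart E t v → HasSquare E s t v

/-- The triples `(v, s, t)` with `s` and `t` adjacent in `G` such that the edge labelled `s` at `v`
lies in no square with sides labelled `s` and `t`. Their number is a perimeter of the graph. -/
def openSides (G : SimpleGraph B) (E : B → V → V → Prop) : Set (V × B × B) :=
  {σ | G.Adj σ.2.1 σ.2.2 ∧ HasDart E σ.2.1 σ.1 ∧ ¬HasSquare E σ.2.1 σ.2.2 σ.1}

variable {G : SimpleGraph B} {E : B → V → V → Prop} {E' : B → V' → V' → Prop} {s t : B}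
  {v a c x : V}

theorem IsSquare.swap (h : IsSquare E s t v a c x) : IsSquare E t s v c a x :=
  ⟨h.bottom, h.left, h.right, h.top⟩

theorem IsSquare.reflect (hsymm : ∀ s v u, E s v u → E s u v) (h : IsSquare E s t v a c x) :
    IsSquare E s t a v x c :=
  ⟨hsymm _ _ _ h.left, h.top, h.bottom, hsymm _ _ _ h.right⟩

theorem IsSquare.hasSquare (h : IsSquare E s t v a c x) : HasSquare E s t v :=
  ⟨a, c, x, h⟩

theorem HasSquare.swap (h : HasSquare E s t v) : HasSquare E t s v :=
  let ⟨a, c, x, h⟩ := h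
  ⟨c, a, x, h.swap⟩

theorem HasSquare.hasDart_right (h : HasSquare E s t v) : HasDart E t v :=
  let ⟨_, c, _, h⟩ := h
  ⟨c, h.bottom⟩

theorem hasDart_of_forall_notMem_openSides (hG : G.Preconnected)
    (hv : ∀ s t, (v, s, t) ∉ openSides G E) (hs : HasDart E s v) (t : B) : HasDart E t v := by
  obtain ⟨p⟩ := hG s t
  induction p with
  | nil => exact hs
  | @cons s m _ hadj _ ih =>
    exact ih (by_contra fun hm => hv s m ⟨hadj, hs, fun hsq => hm hsq.hasDart_right⟩)

theorem mul_card_le_ncard_darts_add_ncard_openSides [Finite V] [Finite B] (hG : G.Preconnected)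
    (hE : ∀ v, ∃ s, HasDart E s v) :
    Nat.card B * Nat.card V ≤ (darts E).ncard + Nat.card B * (openSides G E).ncard := by
  set boundary : Set V := Prod.fst '' openSides G E
  have hdarts : boundaryᶜ ×ˢ Set.univ ⊆ darts E := by
    rintro ⟨v, t⟩ ⟨hv, -⟩
    obtain ⟨s, hs⟩ := hE v
    exact hasDart_of_forall_notMem_openSides hG (fun s t h => hv ⟨_, h, rfl⟩) hs t
  have hinterior : boundaryᶜ.ncard * Nat.card B ≤ (darts E).ncard := by
    simpa [Set.ncard_prod, Set.ncard_univ] using Set.ncard_le_ncard hdarts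
  have hboundary : boundary.ncard ≤ (openSides G E).ncard := Set.ncard_image_le
  calc Nat.card B * Nat.card V
      = boundaryᶜ.ncard * Nat.card B + Nat.card B * boundary.ncard := by
        rw [← Set.ncard_add_ncard_compl boundary]; ring
    _ ≤ (darts E).ncard + Nat.card B * (openSides G E).ncard := by gcongr

variable (G E E') in
/-- The open sides of `E` whose image under `f` is no longer open in `E'`. -/
def closedSides (f : V → V') : Set (V × B × B) :=
  {σ ∈ openSides G E | HasSquare E' σ.2.1 σ.2.2 (f σ.1)}

variable (G E E') in
/-- The open sides of `E'` lying on edges which do not come from `E`. -/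
def newSides (f : V → V') : Set (V' × B × B) :=
  {σ ∈ openSides G E' | ∀ v, f v = σ.1 → ¬HasDart E σ.2.1 v}

theorem ncard_openSides_add_ncard_closedSides_le [Finite V] [Finite V'] [Finite B] {f : V → V'}
    (hf : ∀ s v u, E s v u → E' s (f v) (f u)) :
    (openSides G E').ncard + (closedSides G E E' f).ncard ≤
      (openSides G E).ncard + (newSides G E E' f).ncard := by
  have hsub : openSides G E' ⊆ Prod.map f id '' (openSides G E \ closedSides G E E' f) ∪
      newSides G E E' f := by
    rintro ⟨y, s, t⟩ hy
    by_cases hnew : ∀ v, f v = y → ¬HasDart E s v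
    · exact Or.inr ⟨hy, hnew⟩
    · push Not at hnew
      obtain ⟨v, rfl, hv⟩ := hnew
      refine Or.inl ⟨(v, s, t),
        ⟨⟨hy.1, hv, fun ⟨a, c, x, h⟩ => hy.2.2 ?_⟩, fun h => hy.2.2 h.2⟩, rfl⟩
      exact ⟨f a, f c, f x, hf _ _ _ h.left, hf _ _ _ h.bottom, hf _ _ _ h.top, hf _ _ _ h.right⟩
  have hle := (Set.ncard_le_ncard hsub).trans (Set.ncard_union_le _ _)
  have himage : (Prod.map f (id : B × B → B × B) ''
      (openSides G E \ closedSides G E E' f)).ncard ≤ _ := Set.ncard_image_le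
  have hdiff := Set.ncard_sdiff_add_ncard_of_subset
    (show closedSides G E E' f ⊆ openSides G E from Set.sep_subset _ _)
  omega

section Fold

/-- The equivalence relations whose quotient is a folded graph: edges with the same label issuing
from equivalent vertices have equivalent ends. -/
def IsFoldingRelation (E : B → V → V → Prop) (r : Setoid V) : Prop :=
  ∀ ⦃s v v' u u'⦄, r v v' → E s v u → E s v' u' → r u u'

/-- The finest folding relation. -/
def foldSetoid (E : B → V → V → Prop) : Setoid V :=
  sInf {r | IsFoldingRelation E r}

/-- The edges of the folded quotient of a labelled graph. -/
def FoldEdge (E : B → V → V → Prop) (s : B) :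
    Quotient (foldSetoid E) → Quotient (foldSetoid E) → Prop :=
  Relation.Map (E s) Quotient.mk'' Quotient.mk''

theorem isFoldingRelation_foldSetoid : IsFoldingRelation E (foldSetoid E) :=
  fun _ _ _ _ _ hv hu hu' r hr => hr (hv r hr) hu hu'

theorem foldSetoid_le {r : Setoid V} (hr : IsFoldingRelation E r) : foldSetoid E ≤ r :=
  sInf_le hr

theorem isFolded_foldEdge : IsFolded (FoldEdge E) := by
  rintro s _ _ _ ⟨v, u, hu, rfl, rfl⟩ ⟨v', u', hu', hvv', rfl⟩
  exact Quotient.sound (isFoldingRelation_foldSetoid (Setoid.symm' _ (Quotient.exact hvv')) hu hu')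

theorem foldEdge_symm (hsymm : ∀ s v u, E s v u → E s u v) {y z : Quotient (foldSetoid E)}
    (h : FoldEdge E s y z) : FoldEdge E s z y :=
  let ⟨v, u, hvu, hv, hu⟩ := h
  ⟨u, v, hsymm _ _ _ hvu, hu, hv⟩

theorem foldEdge_mk (h : E s v a) : FoldEdge E s (Quotient.mk'' v) (Quotient.mk'' a) :=
  ⟨v, a, h, rfl, rfl⟩

theorem foldSetoid_eq_bot (hE : IsFolded E) : foldSetoid E = ⊥ :=
  le_bot_iff.mp <| foldSetoid_le fun _ _ _ _ _ hv hu hu' => hE (hv ▸ hu) hu'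

theorem card_quotient_foldSetoid (hE : IsFolded E) :
    Nat.card (Quotient (foldSetoid E)) = Nat.card V := by
  refine (Nat.card_eq_of_bijective (Quotient.mk'' : V → Quotient (foldSetoid E))
    ⟨fun v u hvu => ?_, Quotient.mk''_surjective⟩).symm
  have hrel : foldSetoid E v u := Quotient.exact hvu
  rwa [foldSetoid_eq_bot hE] at hrel

theorem ncard_darts_foldEdge_le [Finite V] [Finite B] :
    (darts (FoldEdge E)).ncard ≤ (darts E).ncard := by
  have hsub : darts (FoldEdge E) ⊆ Prod.map Quotient.mk'' id '' darts E := by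
    rintro ⟨_, s⟩ ⟨_, v, u, hu, rfl, rfl⟩
    exact ⟨(v, s), ⟨u, hu⟩, rfl⟩
  exact (Set.ncard_le_ncard hsub).trans Set.ncard_image_le

end Fold

section AttachSquare

/-- The edges of the graph obtained from `E` by gluing on a square along the path `a`, `v`, `c`,
where the sides `va` and `vc` are labelled `s` and `t`; its fourth corner is `none`. -/
inductive AttachEdge (E : B → V → V → Prop) (s t : B) (a c : V) : B → Option V → Option V → Prop
  | old {p v u} : E p v u → AttachEdge E s t a c p (some v) (some u)
  | top : AttachEdge E s t a c t (some a) none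
  | top_symm : AttachEdge E s t a c t none (some a)
  | right : AttachEdge E s t a c s (some c) none
  | right_symm : AttachEdge E s t a c s none (some c)

theorem AttachEdge.symm (hsymm : ∀ s v u, E s v u → E s u v) {p : B} {y z : Option V}
    (h : AttachEdge E s t a c p y z) : AttachEdge E s t a c p z y := by
  cases h with
  | old h => exact .old (hsymm _ _ _ h)
  | top => exact .top_symm
  | top_symm => exact .top
  | right => exact .right_symm
  | right_symm => exact .right

theorem isFolded_attachEdge (hE : IsFolded E) (hst : s ≠ t) (ha : ¬HasDart E t a)
    (hc : ¬HasDart E s c) : IsFolded (AttachEdge E s t a c) := by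
  intro p y z z' h h'
  cases h with
  | old h =>
    cases h' with
    | old h' => exact congrArg some (hE h h')
    | top => exact absurd ⟨_, h⟩ ha
    | right => exact absurd ⟨_, h⟩ hc
  | top =>
    cases h' with
    | old h' => exact absurd ⟨_, h'⟩ ha
    | top => rfl
    | right => rfl
  | top_symm =>
    cases h' with
    | top_symm => rfl
    | right_symm => exact absurd rfl hst
  | right =>
    cases h' with
    | old h' => exact absurd ⟨_, h'⟩ hc
    | top => rfl
    | right => rfl
  | right_symm =>
    cases h' with
    | top_symm => exact absurd rfl hst
    | right_symm => rfl

theorem ncard_darts_attachEdge_le [Finite V] [Finite B] :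
    (darts (AttachEdge E s t a c)).ncard ≤ (darts E).ncard + 4 := by
  have hsub : darts (AttachEdge E s t a c) ⊆
      Prod.map some id '' darts E ∪ {(some a, t), (none, t), (some c, s), (none, s)} := by
    rintro ⟨_, p⟩ ⟨_, h⟩
    cases h with
    | old h => exact Or.inl ⟨(_, p), ⟨_, h⟩, rfl⟩
    | top | top_symm | right | right_symm => simp
  calc (darts (AttachEdge E s t a c)).ncard
      ≤ (Prod.map (some : V → Option V) id '' darts E).ncard +
          ({(some a, t), (none, t), (some c, s), (none, s)} : Set (Option V × B)).ncard :=
        (Set.ncard_le_ncard hsub).trans (Set.ncard_union_le _ _)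
    _ ≤ (darts E).ncard + 4 := by
        gcongr
        · exact Set.ncard_image_le
        · grind [Set.ncard_insert_le, Set.ncard_singleton]

end AttachSquare

section Fill

/-- The edges of the graph obtained from `E` by gluing on a square along the path `a`, `v`, `c` and
folding the result. -/
abbrev FillEdge (E : B → V → V → Prop) (s t : B) (a c : V) (p : B) :
    Quotient (foldSetoid (AttachEdge E s t a c)) → Quotient (foldSetoid (AttachEdge E s t a c)) →
      Prop :=
  FoldEdge (AttachEdge E s t a c) p

/-- The map from the vertices of `E` to those of `FillEdge E s t a c`. -/
def fillMap (E : B → V → V → Prop) (s t : B) (a c v : V) :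
    Quotient (foldSetoid (AttachEdge E s t a c)) :=
  Quotient.mk'' (some v)

/-- The image of the fourth corner of the square glued on in `FillEdge E s t a c`. -/
def fillApex (E : B → V → V → Prop) (s t : B) (a c : V) :
    Quotient (foldSetoid (AttachEdge E s t a c)) :=
  Quotient.mk'' none

theorem fillEdge_fillMap {p : B} {u : V} (h : E p v u) :
    FillEdge E s t a c p (fillMap E s t a c v) (fillMap E s t a c u) :=
  foldEdge_mk (.old h)

theorem isSquare_fillEdge (hva : E s v a) (hvc : E t v c) :
    IsSquare (FillEdge E s t a c) s t (fillMap E s t a c v) (fillMap E s t a c a)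
      (fillMap E s t a c c) (fillApex E s t a c) :=
  ⟨foldEdge_mk (.old hva), foldEdge_mk (.old hvc), foldEdge_mk .top, foldEdge_mk .right⟩

theorem hasDart_fillEdge {p : B} {y : Quotient (foldSetoid (AttachEdge E s t a c))}
    (hy : HasDart (FillEdge E s t a c) p y) :
    (∃ v, fillMap E s t a c v = y ∧ HasDart E p v) ∨
      (p = t ∧ (y = fillMap E s t a c a ∨ y = fillApex E s t a c)) ∨
      (p = s ∧ (y = fillMap E s t a c c ∨ y = fillApex E s t a c)) := by
  obtain ⟨_, _, _, h, rfl, -⟩ := hy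
  cases h with
  | old h => exact Or.inl ⟨_, rfl, _, h⟩
  | top => exact Or.inr (Or.inl ⟨rfl, Or.inl rfl⟩)
  | top_symm => exact Or.inr (Or.inl ⟨rfl, Or.inr rfl⟩)
  | right => exact Or.inr (Or.inr ⟨rfl, Or.inl rfl⟩)
  | right_symm => exact Or.inr (Or.inr ⟨rfl, Or.inr rfl⟩)

end Fill

section FillPerimeter

open Classical in
/-- Equal to `0` or `1` according to whether `a` already has an edge labelled `t`. -/
noncomputable def missingDart (E : B → V → V → Prop) (t : B) (a : V) : ℕ :=
  if HasDart E t a then 0 else 1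

theorem missingDart_add_missingDart_le_one (h : HasDart E s v ∨ HasDart E t a) :
    missingDart E s v + missingDart E t a ≤ 1 := by
  unfold missingDart
  split_ifs <;> simp_all

variable {f : V → V'} {x y z : V'}

theorem one_add_missingDart_le_ncard_closedSides [Finite V] [Finite B]
    (hsymm : ∀ s v u, E s v u → E s u v) (hsymm' : ∀ s v u, E' s v u → E' s u v)
    (hst : G.Adj s t) (hva : E s v a) (hvc : HasDart E t v) (hopen : ¬HasSquare E s t v)
    (hsq : IsSquare E' s t (f v) (f a) y z) :
    1 + missingDart E t a ≤ {σ ∈ closedSides G E E' f | σ.2 = (s, t)}.ncard := by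
  have hv : (v, s, t) ∈ closedSides G E E' f := ⟨⟨hst, ⟨a, hva⟩, hopen⟩, hsq.hasSquare⟩
  by_cases ha : HasDart E t a
  · rw [missingDart, if_pos ha, add_zero, Nat.one_le_iff_ne_zero, ← Nat.pos_iff_ne_zero,
      Set.ncard_pos]
    exact ⟨_, hv, rfl⟩
  · have ha' : (a, s, t) ∈ closedSides G E E' f :=
      ⟨⟨hst, ⟨v, hsymm _ _ _ hva⟩, fun h => ha h.hasDart_right⟩, (hsq.reflect hsymm').hasSquare⟩
    have hne : (v, s, t) ≠ (a, s, t) := by rintro ⟨⟩; exact ha hvc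
    rw [missingDart, if_neg ha, one_add_one_eq_two, ← Set.ncard_pair hne]
    refine Set.ncard_le_ncard ?_
    rintro _ (rfl | rfl)
    exacts [⟨hv, rfl⟩, ⟨ha', rfl⟩]

theorem ncard_newSides_le [Finite V'] [Finite B] (hdeg : (G.neighborSet t).ncard ≤ 2)
    (hsymm : ∀ s v u, E s v u → E s u v) (hsymm' : ∀ s v u, E' s v u → E' s u v)
    (hfold : IsFolded E') (hf : ∀ s v u, E s v u → E' s (f v) (f u)) (hst : G.Adj s t)
    (hsq : IsSquare E' s t x (f a) y z) :
    {σ ∈ newSides G E E' f | σ.2.1 = t ∧ (σ.1 = f a ∨ σ.1 = z)}.ncard ≤ 2 * missingDart E t a := by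
  by_cases ha : HasDart E t a
  · obtain ⟨b, hab⟩ := ha
    obtain rfl : z = f b := hfold hsq.top (hf _ _ _ hab)
    suffices h : {σ ∈ newSides G E E' f | σ.2.1 = t ∧ (σ.1 = f a ∨ σ.1 = f b)} = ∅ by simp [h]
    rw [Set.eq_empty_iff_forall_notMem]
    rintro ⟨_, _, r⟩ ⟨⟨-, hnew⟩, rfl, rfl | rfl⟩
    exacts [hnew a rfl ⟨b, hab⟩, hnew b rfl ⟨a, hsymm _ _ _ hab⟩]
  · have hsub : {σ ∈ newSides G E E' f | σ.2.1 = t ∧ (σ.1 = f a ∨ σ.1 = z)} ⊆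
        {f a, z} ×ˢ ({t} ×ˢ (G.neighborSet t \ {s})) := by
      have hfa : HasSquare E' t s (f a) := (hsq.reflect hsymm').swap.hasSquare
      have hz : HasSquare E' t s z := ((hsq.reflect hsymm').swap.reflect hsymm').hasSquare
      rintro ⟨_, _, r⟩ ⟨⟨⟨hadj, -, hopen⟩, -⟩, rfl, rfl | rfl⟩
      exacts [⟨Or.inl rfl, rfl, hadj, fun h => hopen (h ▸ hfa)⟩,
        ⟨Or.inr rfl, rfl, hadj, fun h => hopen (h ▸ hz)⟩]
    have hnbr : (G.neighborSet t \ {s}).ncard ≤ 1 := by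
      rw [Set.ncard_sdiff_singleton_of_mem (show s ∈ G.neighborSet t from hst.symm)]
      omega
    calc _ ≤ ({f a, z} ×ˢ ({t} ×ˢ (G.neighborSet t \ {s})) : Set (V' × B × B)).ncard :=
          Set.ncard_le_ncard hsub
      _ = ({f a, z} : Set V').ncard * (1 * (G.neighborSet t \ {s}).ncard) := by
          rw [Set.ncard_prod, Set.ncard_prod, Set.ncard_singleton]
      _ ≤ 2 * (1 * 1) := by
          gcongr
          grind [Set.ncard_insert_le, Set.ncard_singleton]
      _ = 2 * missingDart E t a := by rw [missingDart, if_neg ha]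

theorem ncard_openSides_fillEdge_add_le [Finite V] [Finite B]
    (hdeg : ∀ s, (G.neighborSet s).ncard ≤ 2)
    (hsymm : ∀ s v u, E s v u → E s u v) (hst : G.Adj s t) (hva : E s v a) (hvc : E t v c)
    (hopen : ¬HasSquare E s t v) :
    (openSides G (FillEdge E s t a c)).ncard + 2 ≤
      (openSides G E).ncard + missingDart E t a + missingDart E s c := by
  have hsymm' : ∀ p y z, FillEdge E s t a c p y z → FillEdge E s t a c p z y :=
    fun _ _ _ => foldEdge_symm (E := AttachEdge E s t a c) fun _ _ _ => AttachEdge.symm hsymm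
  have hhom : ∀ p v u, E p v u → FillEdge E s t a c p (fillMap E s t a c v) (fillMap E s t a c u) :=
    fun _ _ _ => fillEdge_fillMap
  have hsq := isSquare_fillEdge (a := a) (c := c) hva hvc
  set f := fillMap E s t a c
  set E' := FillEdge E s t a c
  have hcount := ncard_openSides_add_ncard_closedSides_le (G := G) hhom
  have hclosed : 2 + missingDart E t a + missingDart E s c ≤ (closedSides G E E' f).ncard := by
    have h₁ := one_add_missingDart_le_ncard_closedSides hsymm hsymm' hst hva ⟨c, hvc⟩ hopen hsq
    have h₂ := one_add_missingDart_le_ncard_closedSides hsymm hsymm' hst.symm hvc ⟨a, hva⟩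
      (fun h => hopen h.swap) hsq.swap
    have hdisj : Disjoint {σ ∈ closedSides G E E' f | σ.2 = (s, t)}
        {σ ∈ closedSides G E E' f | σ.2 = (t, s)} :=
      Set.disjoint_left.mpr fun σ hσ hσ' => hst.ne (congrArg Prod.fst (hσ.2.symm.trans hσ'.2))
    have hunion := Set.ncard_le_ncard
      (Set.union_subset (Set.sep_subset (closedSides G E E' f) fun σ => σ.2 = (s, t))
        (Set.sep_subset (closedSides G E E' f) fun σ => σ.2 = (t, s)))
    rw [Set.ncard_union_eq hdisj] at hunion
    omega
  have hnew : (newSides G E E' f).ncard ≤ 2 * missingDart E t a + 2 * missingDart E s c := by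
    have h₁ := ncard_newSides_le (hdeg t) hsymm hsymm' isFolded_foldEdge hhom hst hsq
    have h₂ := ncard_newSides_le (hdeg s) hsymm hsymm' isFolded_foldEdge hhom hst.symm hsq.swap
    have hsub : newSides G E E' f ⊆
        {σ ∈ newSides G E E' f | σ.2.1 = t ∧ (σ.1 = f a ∨ σ.1 = fillApex E s t a c)} ∪
          {σ ∈ newSides G E E' f | σ.2.1 = s ∧ (σ.1 = f c ∨ σ.1 = fillApex E s t a c)} := by
      intro σ hσ
      rcases hasDart_fillEdge hσ.1.2.1 with ⟨v, hv, hdart⟩ | hfirst | hsecond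
      exacts [absurd hdart (hσ.2 v hv), Or.inl ⟨hσ, hfirst⟩, Or.inr ⟨hσ, hsecond⟩]
    have hunion := (Set.ncard_le_ncard hsub).trans (Set.ncard_union_le _ _)
    omega
  omega

end FillPerimeter

end LabelledGraph

section CosetGraph

open RightAngledCoxeterGroup

universe u

variable {B : Type u} {G : SimpleGraph B}

section LabelledPath

variable {V V' : Type*} {E : B → V → V → Prop} {E' : B → V' → V' → Prop}

variable (G) in
/-- `LabelledPath G E w v u` means that some path from `v` to `u` has its labels spelling `w`, read
from right to left. -/
inductive LabelledPath (E : B → V → V → Prop) : RightAngledCoxeterGroup G → V → V → Prop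
  | nil (v) : LabelledPath E 1 v v
  | cons {w v u x s} : LabelledPath E w v u → E s u x →
      LabelledPath E ((system G).simple s * w) v x

theorem LabelledPath.map {w : RightAngledCoxeterGroup G} {v u : V} {f : V → V'}
    (hf : ∀ s v u, E s v u → E' s (f v) (f u)) (h : LabelledPath G E w v u) :
    LabelledPath G E' w (f v) (f u) := by
  induction h with
  | nil => exact .nil _
  | cons _ hs ih => exact .cons ih (hf _ _ _ hs)

end LabelledPath

/-- A finite folded labelled graph immersed in the Schreier coset graph of `H`, with a base vertex
over the trivial coset at which every element of `T` is spelled by a loop. -/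
structure CosetGraph (H : Subgroup (RightAngledCoxeterGroup G))
    (T : Set (RightAngledCoxeterGroup G)) where
  V : Type u
  finite : Finite V
  E : B → V → V → Prop
  symm : ∀ s v u, E s v u → E s u v
  isFolded : IsFolded E
  coset : V → RightAngledCoxeterGroup G ⧸ H
  coset_eq : ∀ s v u, E s v u → coset u = (system G).simple s • coset v
  base : V
  coset_base : coset base = (1 : RightAngledCoxeterGroup G)
  exists_hasDart : ∀ v, ∃ s, HasDart E s v
  loop : ∀ h ∈ T, LabelledPath G E h base base

variable {H : Subgroup (RightAngledCoxeterGroup G)} {T : Set (RightAngledCoxeterGroup G)}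

section Ball

theorem finite_setOf_length_le [Finite B] (N : ℕ) :
    {w : RightAngledCoxeterGroup G | (system G).length w ≤ N}.Finite := by
  refine ((List.finite_length_le B N).image (system G).wordProd).subset fun w hw => ?_
  obtain ⟨ω, hω, rfl⟩ := (system G).exists_isReduced w
  exact ⟨ω, hω.symm.trans_le hw, rfl⟩

theorem length_simple_mul_le (w : RightAngledCoxeterGroup G) (s : B) :
    (system G).length ((system G).simple s * w) ≤ (system G).length w + 1 := by
  rcases (system G).length_simple_mul w s with h | h <;> omega

variable (H) in
/-- The ball of radius `N` about the trivial coset in the Schreier coset graph of `H`. -/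
def cosetBall (N : ℕ) : Set (RightAngledCoxeterGroup G ⧸ H) :=
  QuotientGroup.mk '' {w | (system G).length w ≤ N}

/-- The edges of the Schreier coset graph inside a ball. -/
def CosetBallEdge {N : ℕ} (s : B) (v u : cosetBall H N) : Prop :=
  u.1 = (system G).simple s • v.1

/-- The coset of `w` as a vertex of a ball. -/
noncomputable def cosetBallMk {N : ℕ} (w : RightAngledCoxeterGroup G)
    (hw : (system G).length w ≤ N) : cosetBall H N :=
  ⟨w, w, hw, rfl⟩

theorem CosetBallEdge.symm {N : ℕ} {s : B} {v u : cosetBall H N} (h : CosetBallEdge s v u) :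
    CosetBallEdge s u v := by
  rw [CosetBallEdge, h, smul_smul, (system G).simple_mul_simple_self, one_smul]

theorem labelledPath_cosetBall {N : ℕ} (w : RightAngledCoxeterGroup G)
    (hw : (system G).length w ≤ N) :
    LabelledPath G CosetBallEdge w (cosetBallMk (H := H) 1 (by simp)) (cosetBallMk w hw) := by
  induction hn : (system G).length w generalizing w with
  | zero =>
    obtain rfl := (system G).length_eq_zero_iff.mp hn
    exact .nil _
  | succ n ih =>
    obtain ⟨s, hs⟩ := (system G).exists_leftDescent_of_ne_one
      (show w ≠ 1 by rintro rfl; simp at hn)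
    have hlen := (system G).isLeftDescent_iff.mp hs
    have hpath := ih ((system G).simple s * w) (by omega) (by omega)
    have hedge : CosetBallEdge s (cosetBallMk w hw) (cosetBallMk (H := H)
      ((system G).simple s * w) (by omega)) := rfl
    have hpath := hpath.cons hedge.symm
    rwa [(system G).simple_mul_simple_cancel_left] at hpath

theorem exists_hasDart_cosetBall [Nonempty B] {N : ℕ} (hN : 0 < N) (v : cosetBall H N) :
    ∃ s, HasDart CosetBallEdge s v := by
  obtain ⟨_, w, hw, rfl⟩ := v
  by_cases hw1 : w = 1
  · subst hw1
    obtain ⟨s⟩ := ‹Nonempty B›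
    exact ⟨s, cosetBallMk ((system G).simple s * 1) (by
      rwa [mul_one, (system G).length_simple]), rfl⟩
  · obtain ⟨s, hs⟩ := (system G).exists_leftDescent_of_ne_one hw1
    have hlen := (system G).isLeftDescent_iff.mp hs
    exact ⟨s, cosetBallMk ((system G).simple s * w) (by have : _ ≤ N := hw; omega), rfl⟩

theorem nonempty_cosetGraph [Nonempty B] [Finite B] (hT : T.Finite) (hTH : T ⊆ H) :
    Nonempty (CosetGraph H T) := by
  obtain ⟨N, hN⟩ := (hT.image (system G).length).bddAbove
  have hlen : ∀ h ∈ T, (system G).length h ≤ N + 1 := fun h hh =>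
    (hN ⟨h, hh, rfl⟩).trans N.le_succ
  exact ⟨{
    V := cosetBall H (N + 1)
    finite := ((finite_setOf_length_le _).image _).to_subtype
    E := CosetBallEdge
    symm _ _ _ := CosetBallEdge.symm
    isFolded _ _ _ _ h h' := Subtype.ext (Eq.trans h (Eq.symm h'))
    coset := Subtype.val
    coset_eq _ _ _ h := h
    base := cosetBallMk 1 (by simp)
    coset_base := rfl
    exists_hasDart := exists_hasDart_cosetBall N.succ_pos
    loop h hh := by
      have hbase : cosetBallMk h (hlen h hh) = cosetBallMk (H := H) 1 (by simp) :=
        Subtype.ext (QuotientGroup.eq.mpr (by simpa using hTH hh))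
      have hpath := labelledPath_cosetBall (H := H) h (hlen h hh)
      rwa [hbase] at hpath }⟩

end Ball

namespace CosetGraph

attribute [instance] CosetGraph.finite

section FillCoset

variable {V : Type*} {E : B → V → V → Prop} {s t : B} {v a c : V}
  {coset : V → RightAngledCoxeterGroup G ⧸ H}

variable (t a coset) in
/-- The extension of `coset` to the graph with a square glued on at the side from `v` to `a`. -/
noncomputable def attachCoset (y : Option V) : RightAngledCoxeterGroup G ⧸ H :=
  y.elim ((system G).simple t • coset a) coset

theorem attachCoset_eq (hcoset : ∀ s v u, E s v u → coset u = (system G).simple s • coset v)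
    (hst : G.Adj s t) (hva : E s v a) (hvc : E t v c) {p : B} {y z : Option V}
    (h : AttachEdge E s t a c p y z) :
    attachCoset t a coset z = (system G).simple p • attachCoset t a coset y := by
  have hapex : (system G).simple t • coset a = (system G).simple s • coset c := by
    rw [hcoset _ _ _ hva, hcoset _ _ _ hvc, smul_smul, smul_smul, (simple_commute hst).eq]
  cases h with
  | old h => exact hcoset _ _ _ h
  | top => rfl
  | top_symm =>
    simp only [attachCoset, Option.elim, smul_smul, (system G).simple_mul_simple_self, one_smul]
  | right => exact hapex
  | right_symm =>
    simp only [attachCoset, Option.elim, hapex, smul_smul, (system G).simple_mul_simple_self,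
      one_smul]

theorem foldSetoid_le_ker_attachCoset
    (hcoset : ∀ s v u, E s v u → coset u = (system G).simple s • coset v)
    (hst : G.Adj s t) (hva : E s v a) (hvc : E t v c) :
    foldSetoid (AttachEdge E s t a c) ≤ Setoid.ker (attachCoset t a coset) :=
  foldSetoid_le fun _ _ _ _ _ hy hz hz' => by
    change _ = _ at hy
    change _ = _
    rw [attachCoset_eq hcoset hst hva hvc hz, attachCoset_eq hcoset hst hva hvc hz', hy]

end FillCoset

variable (Y : CosetGraph H T) {s t : B} {v a c : Y.V}

/-- The coset graph obtained by gluing on a square along the path `a`, `v`, `c` and folding. -/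
noncomputable def fill (hst : G.Adj s t) (hva : Y.E s v a) (hvc : Y.E t v c) : CosetGraph H T where
  V := Quotient (foldSetoid (AttachEdge Y.E s t a c))
  finite := inferInstance
  E := FillEdge Y.E s t a c
  symm _ _ _ := foldEdge_symm (E := AttachEdge Y.E s t a c) fun _ _ _ => AttachEdge.symm Y.symm
  isFolded := isFolded_foldEdge
  coset := Quotient.lift (attachCoset t a Y.coset) fun _ _ h =>
    foldSetoid_le_ker_attachCoset Y.coset_eq hst hva hvc h
  coset_eq := by
    rintro p _ _ ⟨y, z, h, rfl, rfl⟩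
    exact attachCoset_eq Y.coset_eq hst hva hvc h
  base := fillMap Y.E s t a c Y.base
  coset_base := Y.coset_base
  exists_hasDart y := by
    obtain ⟨y, rfl⟩ := Quotient.mk''_surjective y
    cases y with
    | none => exact ⟨t, _, foldEdge_mk .top_symm⟩
    | some v =>
      obtain ⟨p, u, hvu⟩ := Y.exists_hasDart v
      exact ⟨p, _, fillEdge_fillMap hvu⟩
  loop h hh := (Y.loop h hh).map fun _ _ _ => fillEdge_fillMap

/-- The lexicographic measure that decreases whenever a missing square is filled: the perimeter,
then the excess of the darts over the number of vertices (which is not truncated, by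
`mul_card_le_ncard_darts_add_ncard_openSides`). -/
noncomputable def complexity : ℕ ×ₗ ℕ :=
  toLex ((openSides G Y.E).ncard, (darts Y.E).ncard + Nat.card B * (openSides G Y.E).ncard -
    Nat.card B * Nat.card Y.V)

theorem complexity_fill_lt [Finite B] (hG : G.Preconnected)
    (hdeg : ∀ s, (G.neighborSet s).ncard ≤ 2) (hB : 5 ≤ Nat.card B)
    (hst : G.Adj s t) (hva : Y.E s v a) (hvc : Y.E t v c) (hopen : ¬HasSquare Y.E s t v) :
    (Y.fill hst hva hvc).complexity < Y.complexity := by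
  have hperimeter := ncard_openSides_fillEdge_add_le hdeg Y.symm hst hva hvc hopen
  rw [complexity, complexity, Prod.Lex.toLex_lt_toLex]
  by_cases hdart : HasDart Y.E t a ∨ HasDart Y.E s c
  · refine Or.inl (show (openSides G (FillEdge Y.E s t a c)).ncard < _ from ?_)
    have := missingDart_add_missingDart_le_one hdart
    omega
  · obtain ⟨hat, hcs⟩ := not_or.mp hdart
    have hcard : Nat.card (Y.fill hst hva hvc).V = Nat.card Y.V + 1 :=
      (card_quotient_foldSetoid (isFolded_attachEdge Y.isFolded hst.ne hat hcs)).trans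
        Finite.card_option
    have hdarts : (darts (Y.fill hst hva hvc).E).ncard ≤ (darts Y.E).ncard + 4 :=
      ncard_darts_foldEdge_le.trans ncard_darts_attachEdge_le
    have hexcess := mul_card_le_ncard_darts_add_ncard_openSides hG
      (Y.fill hst hva hvc).exists_hasDart
    rw [hcard, mul_add] at hexcess ⊢
    rw [missingDart, missingDart, if_neg hat, if_neg hcs] at hperimeter
    rcases (Nat.le_of_add_le_add_right hperimeter).lt_or_eq with hlt | heq
    · exact Or.inl hlt
    · change (openSides G (Y.fill hst hva hvc).E).ncard = _ at heq
      rw [heq] at hexcess ⊢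
      exact Or.inr ⟨rfl, by dsimp only; omega⟩

theorem exists_isLocallyComplete [Finite B] (hG : G.Preconnected)
    (hdeg : ∀ s, (G.neighborSet s).ncard ≤ 2) (hB : 5 ≤ Nat.card B) (hT : T.Finite) (hTH : T ⊆ H) :
    ∃ Y : CosetGraph H T, IsLocallyComplete G Y.E := by
  have : Nonempty B := (Nat.card_pos_iff.mp (by omega)).1
  have := nonempty_cosetGraph hT hTH
  refine ⟨Function.argmin complexity, fun s t v hst ⟨a, hva⟩ ⟨c, hvc⟩ => ?_⟩
  by_contra hopen
  exact Function.not_lt_argmin complexity _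
    (complexity_fill_lt _ hG hdeg hB hst hva hvc hopen)

end CosetGraph

end CosetGraph

section FibreAction

variable {W L V : Type*} [Group W] {F : W →* Function.End (V × L)}

theorem map_mul_apply (w w' : W) (p : V × L) : F (w * w') p = F w (F w' p) := by
  rw [map_mul]
  rfl

theorem map_one_apply (p : V × L) : F 1 p = p := by
  rw [map_one]
  rfl

theorem map_inv_apply_eq {w : W} {p q : V × L} (h : F w p = q) : F w⁻¹ q = p := by
  rw [← h, ← map_mul_apply, inv_mul_cancel, map_one_apply]

variable [Group L]

/-- The action `F` of `W` on `V × L` commutes with right multiplication by `L`; it amounts to an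
action on `V` together with a cocycle with values in `L`. -/
def CommutesWithRightMul (F : W →* Function.End (V × L)) : Prop :=
  ∀ w v x y, F w (v, x * y) = ((F w (v, x)).1, (F w (v, x)).2 * y)

theorem CommutesWithRightMul.fst_apply (hF : CommutesWithRightMul F) (w : W) (v : V) (x y : L) :
    (F w (v, x)).1 = (F w (v, y)).1 := by
  rw [← mul_inv_cancel_left y x, hF]

/-- The stabilizer of the fibre over `v`. -/
def CommutesWithRightMul.stabilizer (hF : CommutesWithRightMul F) (v : V) : Subgroup W where
  carrier := {w | (F w (v, 1)).1 = v}
  one_mem' := congrArg Prod.fst (map_one_apply (v, 1))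
  mul_mem' {w w'} hw hw' := by
    change (F w' (v, 1)).1 = v at hw'
    change (F (w * w') (v, 1)).1 = v
    rw [map_mul_apply, ← Prod.eta (F w' (v, 1)), hw', hF.fst_apply w v _ 1]
    exact hw
  inv_mem' {w} hw := by
    have hw' : F w⁻¹ (v, (F w (v, 1)).2) = (v, 1) := map_inv_apply_eq (Prod.ext hw rfl)
    exact (hF.fst_apply _ _ _ _).trans (congrArg Prod.fst hw')

theorem CommutesWithRightMul.finiteIndex_stabilizer [Finite V] (hF : CommutesWithRightMul F)
    (v : V) : (hF.stabilizer v).FiniteIndex := by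
  have hinj : Function.Injective
      fun q : W ⧸ hF.stabilizer v => (F q.out (v, 1)).1 := fun q q' hqq' => by
    have hback : F q.out⁻¹ ((F q.out (v, 1)).1, (F q.out (v, 1)).2) = (v, 1) :=
      map_inv_apply_eq rfl
    have hmem : q.out⁻¹ * q'.out ∈ hF.stabilizer v := by
      change (F (q.out⁻¹ * q'.out) (v, 1)).1 = v
      rw [map_mul_apply, ← Prod.eta (F q'.out (v, 1)),
        show (F q'.out (v, 1)).1 = (F q.out (v, 1)).1 from hqq'.symm, hF.fst_apply, hback]
    rw [← QuotientGroup.out_eq' q, ← QuotientGroup.out_eq' q']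
    exact QuotientGroup.eq.mpr hmem
  have := Finite.of_injective _ hinj
  exact Subgroup.finiteIndex_of_finite_quotient

/-- The action of the stabilizer of the fibre over `v` on this fibre is by left multiplications,
hence yields a homomorphism to `L`. -/
def CommutesWithRightMul.stabilizerHom (hF : CommutesWithRightMul F) (v : V) :
    hF.stabilizer v →* L where
  toFun w := (F w (v, 1)).2
  map_one' := congrArg Prod.snd (map_one_apply (v, 1))
  map_mul' w w' := by
    have hw' : F w' (v, 1) = (v, 1 * (F w' (v, 1)).2) := Prod.ext w'.2 (one_mul _).symm
    change (F (w * w') (v, 1)).2 = _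
    rw [map_mul_apply, hw', hF, one_mul]

theorem CommutesWithRightMul.map_eq_of_mem_closure {F : W →* Function.End (V × W)}
    (hF : CommutesWithRightMul F) {v : V} {T : Set W} (hT : ∀ h ∈ T, F h (v, 1) = (v, h)) {h : W}
    (hh : h ∈ Subgroup.closure T) : F h (v, 1) = (v, h) := by
  have hmul : ∀ x y, F x (v, 1) = (v, x) → F x (v, y) = (v, x * y) := fun x y hx => by
    rw [← one_mul y, hF, hx, one_mul]
  induction hh using Subgroup.closure_induction with
  | mem x hx => exact hT x hx
  | one => exact map_one_apply _
  | mul x y _ _ hx hy => rw [map_mul_apply, hy, hmul x y hx]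
  | inv x _ hx => exact map_inv_apply_eq (by rw [hmul _ _ hx, mul_inv_cancel])

end FibreAction

section CompletionAction

open RightAngledCoxeterGroup

variable {B V : Type*} {G : SimpleGraph B} {E : B → V → V → Prop} {s t : B} {v u : V}

open Classical in
variable (G E) in
/-- The action of the generator `s` on `V × W`, where `W` is the right-angled Coxeter group of `G`:
follow the edge labelled `s`, recording the label, or stay put if there is none. -/
noncomputable def step (s : B) : Function.End (V × RightAngledCoxeterGroup G) := fun p =>
  if h : HasDart E s p.1 then (h.choose, (system G).simple s * p.2) else p

theorem step_of_edge (hE : IsFolded E) (h : E s v u) (w : RightAngledCoxeterGroup G) :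
    step G E s (v, w) = (u, (system G).simple s * w) := by
  have hdart : HasDart E s (v, w).1 := ⟨u, h⟩
  rw [step, dif_pos hdart, hE hdart.choose_spec h]

theorem step_of_not_hasDart (h : ¬HasDart E s v) (w : RightAngledCoxeterGroup G) :
    step G E s (v, w) = (v, w) :=
  dif_neg h

theorem step_mul_self (hsymm : ∀ s v u, E s v u → E s u v) (hE : IsFolded E) (s : B) :
    step G E s * step G E s = 1 := by
  funext ⟨v, w⟩
  change step G E s (step G E s (v, w)) = (v, w)
  by_cases h : HasDart E s v
  · obtain ⟨u, h⟩ := h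
    rw [step_of_edge hE h, step_of_edge hE (hsymm _ _ _ h),
      (system G).simple_mul_simple_cancel_left]
  · rw [step_of_not_hasDart h, step_of_not_hasDart h]

theorem IsLocallyComplete.hasDart_of_edge (hloc : IsLocallyComplete G E) (hE : IsFolded E)
    (hsymm : ∀ s v u, E s v u → E s u v) (hst : G.Adj s t) (hvu : E s v u) (hu : HasDart E t u) :
    HasDart E t v := by
  obtain ⟨v', _, x, h⟩ := hloc hst ⟨v, hsymm _ _ _ hvu⟩ hu
  obtain rfl := hE (hsymm _ _ _ hvu) h.left
  exact ⟨x, h.top⟩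

theorem commute_step (hsymm : ∀ s v u, E s v u → E s u v) (hE : IsFolded E)
    (hloc : IsLocallyComplete G E) (hst : G.Adj s t) : Commute (step G E s) (step G E t) := by
  funext ⟨v, w⟩
  change step G E s (step G E t (v, w)) = step G E t (step G E s (v, w))
  by_cases hs : HasDart E s v <;> by_cases ht : HasDart E t v
  · obtain ⟨a, c, x, h⟩ := hloc hst hs ht
    rw [step_of_edge hE h.bottom, step_of_edge hE h.right, step_of_edge hE h.left,
      step_of_edge hE h.top, ← mul_assoc, ← mul_assoc, (simple_commute hst).eq]
  · obtain ⟨a, ha⟩ := hs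
    have hat := mt (hloc.hasDart_of_edge hE hsymm hst ha) ht
    rw [step_of_not_hasDart ht, step_of_edge hE ha, step_of_not_hasDart hat]
  · obtain ⟨c, hc⟩ := ht
    have hcs := mt (hloc.hasDart_of_edge hE hsymm hst.symm hc) hs
    rw [step_of_not_hasDart hs, step_of_edge hE hc, step_of_not_hasDart hcs]
  · rw [step_of_not_hasDart hs, step_of_not_hasDart ht, step_of_not_hasDart hs]

theorem step_mul_right (hE : IsFolded E) (s : B) (v : V) (x y : RightAngledCoxeterGroup G) :
    step G E s (v, x * y) = ((step G E s (v, x)).1, (step G E s (v, x)).2 * y) := by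
  by_cases h : HasDart E s v
  · obtain ⟨u, h⟩ := h
    rw [step_of_edge hE h, step_of_edge hE h, mul_assoc]
  · rw [step_of_not_hasDart h, step_of_not_hasDart h]

theorem length_step_le (hE : IsFolded E) (s : B) (p : V × RightAngledCoxeterGroup G) :
    (system G).length (step G E s p).2 ≤ (system G).length p.2 + 1 := by
  obtain ⟨v, w⟩ := p
  by_cases h : HasDart E s v
  · obtain ⟨u, h⟩ := h
    rw [step_of_edge hE h]
    exact length_simple_mul_le w s
  · rw [step_of_not_hasDart h]
    exact Nat.le_succ _

end CompletionAction

namespace CosetGraph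

open RightAngledCoxeterGroup

variable {B : Type*} {G : SimpleGraph B} {H : Subgroup (RightAngledCoxeterGroup G)}
  {T : Set (RightAngledCoxeterGroup G)} (Y : CosetGraph H T) (hloc : IsLocallyComplete G Y.E)

/-- The action of the right-angled Coxeter group `W` on `Y.V × W` in which the generators act by
`step`. -/
noncomputable def action :
    RightAngledCoxeterGroup G →* Function.End (Y.V × RightAngledCoxeterGroup G) :=
  (system G).lift ⟨step G Y.E, isLiftable_of_commute (step_mul_self Y.symm Y.isFolded)
    fun _ _ => commute_step Y.symm Y.isFolded hloc⟩

theorem action_simple_mul (s : B) (w : RightAngledCoxeterGroup G)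
    (p : Y.V × RightAngledCoxeterGroup G) :
    Y.action hloc ((system G).simple s * w) p = step G Y.E s (Y.action hloc w p) := by
  rw [map_mul_apply, action, (system G).lift_apply_simple]

theorem commutesWithRightMul_action : CommutesWithRightMul (Y.action hloc) := by
  intro w v x y
  induction w using (system G).simple_induction_left with
  | one => simp only [map_one_apply]
  | mul_simple_left w s ih =>
    rw [action_simple_mul, action_simple_mul, ih, step_mul_right Y.isFolded]

theorem coset_action (w : RightAngledCoxeterGroup G) :
    Y.coset (Y.action hloc w (Y.base, 1)).1 = ((Y.action hloc w (Y.base, 1)).2 : _ ⧸ H) := by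
  induction w using (system G).simple_induction_left with
  | one => rw [map_one_apply, Y.coset_base]
  | mul_simple_left w s ih =>
    rw [action_simple_mul]
    generalize Y.action hloc w (Y.base, 1) = p at ih
    obtain ⟨v, x⟩ := p
    by_cases h : HasDart Y.E s v
    · obtain ⟨u, h⟩ := h
      rw [step_of_edge Y.isFolded h]
      exact (Y.coset_eq _ _ _ h).trans (congrArg _ ih)
    · rwa [step_of_not_hasDart h]

theorem length_action_le (w : RightAngledCoxeterGroup G) (v : Y.V) :
    (system G).length (Y.action hloc w (v, 1)).2 ≤ (system G).length w := by
  induction hn : (system G).length w generalizing w with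
  | zero =>
    obtain rfl := (system G).length_eq_zero_iff.mp hn
    rw [map_one_apply, (system G).length_one]
  | succ n ih =>
    obtain ⟨s, hs⟩ := (system G).exists_leftDescent_of_ne_one
      (show w ≠ 1 by rintro rfl; simp at hn)
    have hlen := (system G).isLeftDescent_iff.mp hs
    have ih := ih ((system G).simple s * w) (by omega)
    rw [← (system G).simple_mul_simple_cancel_left (w := w) s, action_simple_mul]
    exact (length_step_le Y.isFolded s _).trans (by omega)

theorem action_eq_of_labelledPath {w : RightAngledCoxeterGroup G} {v u : Y.V}
    (h : LabelledPath G Y.E w v u) : Y.action hloc w (v, 1) = (u, w) := by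
  induction h with
  | nil => exact map_one_apply _
  | cons _ hs ih => rw [action_simple_mul, ih, step_of_edge Y.isFolded hs]

end CosetGraph

open RightAngledCoxeterGroup in
theorem exists_virtual_retraction {B : Type*} [Finite B] {G : SimpleGraph B} (hG : G.Preconnected)
    (hdeg : ∀ s, (G.neighborSet s).ncard ≤ 2) (hB : 5 ≤ Nat.card B)
    {H : Subgroup (RightAngledCoxeterGroup G)} (hH : H.FG) :
    ∃ (K : Subgroup (RightAngledCoxeterGroup G)) (r : K →* RightAngledCoxeterGroup G),
      K.FiniteIndex ∧ H ≤ K ∧ (∀ k : K, (k : RightAngledCoxeterGroup G) ∈ H ↔ r k = k) ∧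
        ∀ k, (system G).length (r k) ≤ (system G).length (k : RightAngledCoxeterGroup G) := by
  obtain ⟨T, rfl⟩ := hH
  obtain ⟨Y, hloc⟩ := CosetGraph.exists_isLocallyComplete hG hdeg hB T.finite_toSet
    Subgroup.subset_closure
  have hF := Y.commutesWithRightMul_action hloc
  have hH : ∀ h ∈ Subgroup.closure (T : Set (RightAngledCoxeterGroup G)),
      Y.action hloc h (Y.base, 1) = (Y.base, h) := fun _ => hF.map_eq_of_mem_closure
    fun h hh => Y.action_eq_of_labelledPath hloc (Y.loop h hh)
  refine ⟨hF.stabilizer Y.base, hF.stabilizerHom Y.base, hF.finiteIndex_stabilizer Y.base,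
    fun h hh => congrArg Prod.fst (hH h hh),
    fun k => ⟨fun hk => congrArg Prod.snd (hH k hk), fun hk => ?_⟩,
    fun k => Y.length_action_le hloc k Y.base⟩
  have hcoset := Y.coset_action hloc k
  rw [show (Y.action hloc k (Y.base, 1)).1 = Y.base from k.2,
    show (Y.action hloc k (Y.base, 1)).2 = k from hk, Y.coset_base, QuotientGroup.eq] at hcoset
  simpa using hcoset

section SurfaceGroup

open scoped commutatorElement

/-- A solution of the surface relation in a group, in the coordinates
`aⱼ = even j * (even (j + 1))⁻¹` and `bⱼ = even (j + 1) * odd j * (even (j + 1))⁻¹`. The `part j`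
are the partial products of the commutators `⁅aⱼ, bⱼ⁆`. -/
@[ext]
structure EvenOddSystem (g : ℕ) (Γ : Type*) [Group Γ] where
  even : Fin (g + 1) → Γ
  odd : Fin (g + 1) → Γ
  part : Fin (g + 1) → Γ
  even_last : even (Fin.last g) = 1
  odd_last : odd (Fin.last g) = 1
  part_zero : part 0 = 1
  part_last : part (Fin.last g) = 1
  part_succ : ∀ j : Fin g, part j.succ = part j.castSucc *
    (even j.castSucc * odd j.castSucc * (even j.castSucc)⁻¹ *
      even j.succ * (odd j.castSucc)⁻¹ * (even j.succ)⁻¹)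

theorem partialProd_last {g : ℕ} {Γ : Type*} [Monoid Γ] (c : Fin g → Γ) :
    Fin.partialProd c (Fin.last g) = ((List.finRange g).map c).prod := by
  rw [Fin.partialProd, Fin.val_last, List.ofFn_eq_map, List.take_of_length_le (by simp)]

theorem eq_partialProd {g : ℕ} {Γ : Type*} [Monoid Γ] {c : Fin g → Γ} {P : Fin (g + 1) → Γ}
    (hzero : P 0 = 1) (hsucc : ∀ j : Fin g, P j.succ = P j.castSucc * c j) :
    P = Fin.partialProd c := by
  funext j
  induction j using Fin.induction with
  | zero => rw [hzero, Fin.partialProd_zero]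
  | succ j ih => rw [hsucc, ih, Fin.partialProd_succ]

theorem map_surfaceRelator {g : ℕ} {Γ : Type*} [Group Γ] (f : FreeGroup (Fin g ⊕ Fin g) →* Γ) :
    f (surfaceRelator g) = Fin.partialProd
      (fun j => ⁅f (.of (Sum.inl j)), f (.of (Sum.inr j))⁆) (Fin.last g) := by
  rw [partialProd_last, surfaceRelator, map_list_prod, List.map_map]
  congr 1
  exact List.map_congr_left fun j _ => map_commutatorElement _ _ _

namespace EvenOddSystem

variable {g : ℕ} {Γ : Type*} [Group Γ] (d : EvenOddSystem g Γ)

/-- The images of the standard generators of the surface group. -/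
def generator : Fin g ⊕ Fin g → Γ :=
  Sum.elim (fun j => d.even j.castSucc * (d.even j.succ)⁻¹)
    fun j => d.even j.succ * d.odd j.castSucc * (d.even j.succ)⁻¹

theorem part_succ_eq_mul_commutatorElement (j : Fin g) : d.part j.succ =
    d.part j.castSucc * ⁅d.generator (Sum.inl j), d.generator (Sum.inr j)⁆ := by
  rw [d.part_succ, commutatorElement_def]
  simp only [generator, Sum.elim_inl, Sum.elim_inr]
  group

theorem part_eq_partialProd : d.part =
    Fin.partialProd fun j => ⁅d.generator (Sum.inl j), d.generator (Sum.inr j)⁆ :=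
  eq_partialProd d.part_zero d.part_succ_eq_mul_commutatorElement

theorem generator_injective :
    Function.Injective (generator : EvenOddSystem g Γ → Fin g ⊕ Fin g → Γ) := by
  intro d d' h
  have heven : d.even = d'.even := by
    funext j
    induction j using Fin.reverseInduction with
    | last => rw [d.even_last, d'.even_last]
    | cast j ih =>
      have ha : d.even j.castSucc * (d.even j.succ)⁻¹ = d'.even j.castSucc * (d'.even j.succ)⁻¹ :=
        congrFun h (Sum.inl j)
      rwa [ih, mul_left_inj] at ha
  have hodd : d.odd = d'.odd := by
    funext j
    induction j using Fin.lastCases with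
    | last => rw [d.odd_last, d'.odd_last]
    | cast j =>
      have hb : d.even j.succ * d.odd j.castSucc * (d.even j.succ)⁻¹ =
          d'.even j.succ * d'.odd j.castSucc * (d'.even j.succ)⁻¹ := congrFun h (Sum.inr j)
      rwa [heven, mul_left_inj, mul_right_inj] at hb
  exact EvenOddSystem.ext heven hodd (by rw [d.part_eq_partialProd, d'.part_eq_partialProd, h])

theorem ext_even_odd {d d' : EvenOddSystem g Γ} (heven : ∀ j, d.even j = d'.even j)
    (hodd : ∀ j, d.odd j = d'.odd j) : d = d' :=
  generator_injective (by simp only [generator, heven, hodd])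

/-- The image of a system under a homomorphism. -/
@[simps]
def map {Γ' : Type*} [Group Γ'] (f : Γ →* Γ') (d : EvenOddSystem g Γ) : EvenOddSystem g Γ' where
  even j := f (d.even j)
  odd j := f (d.odd j)
  part j := f (d.part j)
  even_last := by rw [d.even_last, map_one]
  odd_last := by rw [d.odd_last, map_one]
  part_zero := by rw [d.part_zero, map_one]
  part_last := by rw [d.part_last, map_one]
  part_succ j := by simp only [d.part_succ, map_mul, map_inv]

theorem generator_map {Γ' : Type*} [Group Γ'] (f : Γ →* Γ') (x : Fin g ⊕ Fin g) :
    (d.map f).generator x = f (d.generator x) := by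
  cases x <;> simp [generator]

/-- The unique system with the given images of the standard generators. -/
def ofGenerator (f : Fin g ⊕ Fin g → Γ)
    (hf : Fin.partialProd (fun j => ⁅f (Sum.inl j), f (Sum.inr j)⁆) (Fin.last g) = 1) :
    EvenOddSystem g Γ :=
  let a := Fin.partialProd fun j => f (Sum.inl j)
  { even := fun j => (a j)⁻¹ * a (Fin.last g)
    odd := Fin.snoc (fun j => ((a j.succ)⁻¹ * a (Fin.last g))⁻¹ * f (Sum.inr j) *
      ((a j.succ)⁻¹ * a (Fin.last g))) 1
    part := Fin.partialProd fun j => ⁅f (Sum.inl j), f (Sum.inr j)⁆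
    even_last := inv_mul_cancel _
    odd_last := Fin.snoc_last _ _
    part_zero := Fin.partialProd_zero _
    part_last := hf
    part_succ := fun j => by
      simp only [a, Fin.partialProd_succ, Fin.snoc_castSucc, commutatorElement_def]
      group }

theorem generator_ofGenerator (f : Fin g ⊕ Fin g → Γ)
    (hf : Fin.partialProd (fun j => ⁅f (Sum.inl j), f (Sum.inr j)⁆) (Fin.last g) = 1) :
    (ofGenerator f hf).generator = f := by
  funext x
  cases x <;> simp only [generator, ofGenerator, Sum.elim_inl, Sum.elim_inr, Fin.partialProd_succ,
    Fin.snoc_castSucc] <;> group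

section Universal

variable (g) in
/-- The tautological system in the surface group. -/
noncomputable def universal : EvenOddSystem g (SurfaceGroup g) :=
  ofGenerator PresentedGroup.of <|
    (map_surfaceRelator (PresentedGroup.mk {surfaceRelator g})).symm.trans
      (PresentedGroup.one_of_mem rfl)

theorem generator_universal :
    (universal g).generator =
      (PresentedGroup.of : Fin g ⊕ Fin g → PresentedGroup {surfaceRelator g}) :=
  generator_ofGenerator _ _

/-- The homomorphism from the surface group which takes the universal system to `d`. -/
noncomputable def lift : SurfaceGroup g →* Γ :=
  PresentedGroup.toGroup (f := d.generator) (rels := {surfaceRelator g}) <| by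
    rintro _ rfl
    simp only [map_surfaceRelator, FreeGroup.lift_apply_of, ← part_eq_partialProd, part_last]

theorem universal_map_lift : (universal g).map d.lift = d := by
  refine generator_injective (funext fun x => ?_)
  rw [generator_map, generator_universal]
  exact PresentedGroup.toGroup.of _

theorem universal_map_injective :
    Function.Injective fun f : SurfaceGroup g →* Γ => (universal g).map f := by
  intro f f' h
  refine PresentedGroup.ext fun x => ?_
  have hx := congrFun (congrArg generator h) x
  rwa [generator_map, generator_map, generator_universal] at hx

end Universal

section Flip

/-- The system obtained by inverting the even elements, and changing the others accordingly. -/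
@[simps]
def flipEven : EvenOddSystem g Γ where
  even j := (d.even j)⁻¹
  odd j := d.part j * d.even j * d.odd j * (d.even j)⁻¹
  part j := (d.even j)⁻¹ * (d.part j)⁻¹ * d.even j
  even_last := by rw [d.even_last, inv_one]
  odd_last := by simp only [d.even_last, d.odd_last, d.part_last, inv_one, mul_one]
  part_zero := by rw [d.part_zero]; group
  part_last := by simp only [d.even_last, d.part_last, inv_one, mul_one]
  part_succ j := by
    rw [d.part_succ]
    group

/-- The system obtained by inverting the odd elements, and changing the others accordingly. -/
@[simps]
def flipOdd : EvenOddSystem g Γ where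
  even j := d.part j * d.even j
  odd j := (d.odd j)⁻¹
  part j := (d.part j)⁻¹
  even_last := by rw [d.part_last, d.even_last, one_mul]
  odd_last := by rw [d.odd_last, inv_one]
  part_zero := by rw [d.part_zero, inv_one]
  part_last := by rw [d.part_last, inv_one]
  part_succ j := by
    rw [d.part_succ]
    group

theorem flipEven_flipEven : d.flipEven.flipEven = d := by
  apply ext_even_odd <;> intro j <;>
    simp only [flipEven_even, flipEven_odd, flipEven_part] <;> group

theorem flipOdd_flipOdd : d.flipOdd.flipOdd = d := by
  apply ext_even_odd <;> intro j <;> simp only [flipOdd_even, flipOdd_odd, flipOdd_part] <;> group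

theorem flipEven_flipOdd : d.flipEven.flipOdd = d.flipOdd.flipEven := by
  apply ext_even_odd <;> intro j <;> simp only [flipEven_even, flipEven_odd, flipEven_part,
    flipOdd_even, flipOdd_odd, flipOdd_part] <;> group

theorem map_flipEven {Γ' : Type*} [Group Γ'] (f : Γ →* Γ') :
    d.flipEven.map f = (d.map f).flipEven := by
  apply ext_even_odd <;> intro j <;> simp

theorem map_flipOdd {Γ' : Type*} [Group Γ'] (f : Γ →* Γ') :
    d.flipOdd.map f = (d.map f).flipOdd := by
  apply ext_even_odd <;> intro j <;> simp

end Flip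

theorem flipEven_odd_mul_even (j : Fin (g + 1)) :
    d.flipEven.odd j * d.even j = d.flipOdd.even j * d.odd j := by
  simp only [flipEven_odd, flipOdd_even]
  group

theorem flipEven_odd_mul_even_add_one (j : Fin (g + 1)) :
    d.flipEven.odd j * d.even (j + 1) = d.flipOdd.even (j + 1) * d.odd j := by
  induction j using Fin.lastCases with
  | last =>
    rw [Fin.last_add_one, d.flipEven.odd_last, d.odd_last, flipOdd_even, d.part_zero, mul_one]
  | cast j =>
    rw [Fin.coeSucc_eq_succ, flipEven_odd, flipOdd_even, d.part_succ]
    group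

end EvenOddSystem

end SurfaceGroup

section Polygon

/-- The polygon with `2g + 2` vertices, which are listed alternately by `Sum.inl` and `Sum.inr`. -/
def polygonGraph (g : ℕ) : SimpleGraph (Fin (g + 1) ⊕ Fin (g + 1)) :=
  SimpleGraph.fromRel fun x y => ∃ j, y = Sum.inr j ∧ (x = Sum.inl j ∨ x = Sum.inl (j + 1))

variable {g : ℕ}

theorem polygonGraph_adj_inl_inr {i j : Fin (g + 1)} :
    (polygonGraph g).Adj (Sum.inl i) (Sum.inr j) ↔ i = j ∨ i = j + 1 := by
  simp [polygonGraph]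

theorem polygonGraph_adj_inl_inl {i j : Fin (g + 1)} :
    ¬(polygonGraph g).Adj (Sum.inl i) (Sum.inl j) := by
  simp [polygonGraph]

theorem polygonGraph_adj_inr_inr {i j : Fin (g + 1)} :
    ¬(polygonGraph g).Adj (Sum.inr i) (Sum.inr j) := by
  simp [polygonGraph]

theorem polygonGraph_adj_induction
    {r : Fin (g + 1) ⊕ Fin (g + 1) → Fin (g + 1) ⊕ Fin (g + 1) → Prop}
    (hsymm : ∀ x y, r x y → r y x) (hself : ∀ j, r (Sum.inl j) (Sum.inr j))
    (hsucc : ∀ j, r (Sum.inl (j + 1)) (Sum.inr j)) {x y} (hxy : (polygonGraph g).Adj x y) :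
    r x y := by
  obtain ⟨-, ⟨j, rfl, rfl | rfl⟩ | ⟨j, rfl, rfl | rfl⟩⟩ := (SimpleGraph.fromRel_adj _ _ _).mp hxy
  exacts [hself j, hsucc j, hsymm _ _ (hself j), hsymm _ _ (hsucc j)]

theorem polygonGraph_ncard_neighborSet_le (x : Fin (g + 1) ⊕ Fin (g + 1)) :
    ((polygonGraph g).neighborSet x).ncard ≤ 2 := by
  obtain ⟨y, z, hyz⟩ : ∃ y z, (polygonGraph g).neighborSet x ⊆ {y, z} := by
    rcases x with j | j
    · refine ⟨Sum.inr j, Sum.inr (j - 1), ?_⟩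
      rintro (i | i) hi
      · exact (polygonGraph_adj_inl_inl hi).elim
      · exact (polygonGraph_adj_inl_inr.mp hi).imp (fun h => by rw [h]) fun h => by simp [h]
    · refine ⟨Sum.inl j, Sum.inl (j + 1), ?_⟩
      rintro (i | i) hi
      · exact (polygonGraph_adj_inl_inr.mp (SimpleGraph.Adj.symm hi)).imp (fun h => by rw [h])
          fun h => by simp [h]
      · exact (polygonGraph_adj_inr_inr hi).elim
  calc ((polygonGraph g).neighborSet x).ncard ≤ ({y, z} : Set _).ncard := Set.ncard_le_ncard hyz
    _ ≤ ({z} : Set (Fin (g + 1) ⊕ Fin (g + 1))).ncard + 1 := Set.ncard_insert_le y {z}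
    _ = 2 := by rw [Set.ncard_singleton]

theorem polygonGraph_preconnected : (polygonGraph g).Preconnected := by
  have hself (j : Fin (g + 1)) : (polygonGraph g).Reachable (Sum.inl j) (Sum.inr j) :=
    (polygonGraph_adj_inl_inr.mpr (Or.inl rfl)).reachable
  have hzero (j : Fin (g + 1)) : (polygonGraph g).Reachable (Sum.inl 0) (Sum.inl j) := by
    induction j using Fin.induction with
    | zero => rfl
    | succ j ih =>
      have hsucc : (polygonGraph g).Adj (Sum.inl j.succ) (Sum.inr j.castSucc) :=
        polygonGraph_adj_inl_inr.mpr (Or.inr Fin.coeSucc_eq_succ.symm)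
      exact (ih.trans (hself _)).trans hsucc.reachable.symm
  have hall (x) : (polygonGraph g).Reachable (Sum.inl 0) x := by
    rcases x with j | j
    exacts [hzero j, (hzero j).trans (hself j)]
  exact fun x y => (hall x).symm.trans (hall y)

theorem five_le_card_polygon (hg : 2 ≤ g) : 5 ≤ Nat.card (Fin (g + 1) ⊕ Fin (g + 1)) := by
  rw [Nat.card_eq_fintype_card, Fintype.card_sum, Fintype.card_fin]
  omega

end Polygon

section Embedding

open RightAngledCoxeterGroup

variable {g : ℕ} {Γ : Type*} [Group Γ]

theorem conj_eq_of_commute {p q x y z : Γ} (hq : q * q = 1) (hxy : Commute x y)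
    (hzy : Commute z y) :
    q * (p * z) * q * (p * z)⁻¹ = q * (p * x) * q * (p * x)⁻¹ *
      (p * x * (q * y) * (p * x)⁻¹ * (p * z) * (q * y)⁻¹ * (p * z)⁻¹) := by
  have hcomm : y * (x⁻¹ * z) * y⁻¹ = x⁻¹ * z :=
    mul_inv_eq_of_eq_mul ((hxy.inv_left.mul_left hzy).eq.symm)
  calc q * (p * z) * q * (p * z)⁻¹ = q * p * x * (x⁻¹ * z) * q⁻¹ * (p * z)⁻¹ := by
        rw [← eq_inv_of_mul_eq_one_left hq]; group
    _ = q * p * x * (q * q) * (y * (x⁻¹ * z) * y⁻¹) * q⁻¹ * (p * z)⁻¹ := by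
        rw [hcomm, hq, mul_one]
    _ = _ := by group

/-- The system of products of pairs of reflections, in a group generated by reflections whose
commutation is governed by the polygon. -/
def EvenOddSystem.ofReflections (e o : Fin (g + 1) → Γ) (he : ∀ j, e j * e j = 1)
    (ho : ∀ j, o j * o j = 1) (hself : ∀ j, Commute (e j) (o j))
    (hsucc : ∀ j, Commute (e (j + 1)) (o j)) : EvenOddSystem g Γ where
  even j := e (Fin.last g) * e j
  odd j := o (Fin.last g) * o j
  part j := o (Fin.last g) * (e (Fin.last g) * e j) * o (Fin.last g) * (e (Fin.last g) * e j)⁻¹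
  even_last := he _
  odd_last := ho _
  part_zero := by
    have hcomm : Commute (e (Fin.last g) * e 0) (o (Fin.last g)) :=
      (hself _).mul_left (Fin.last_add_one g ▸ hsucc (Fin.last g))
    rw [← hcomm.eq, mul_assoc (e _ * e 0), ho, mul_one, mul_inv_cancel]
  part_last := by rw [he, mul_one, ho, inv_one, mul_one]
  part_succ j :=
    conj_eq_of_commute (ho _) (hself _) (Fin.coeSucc_eq_succ (a := j) ▸ hsucc j.castSucc)

namespace SurfaceGroup

open EvenOddSystem

variable (g) in
/-- The endomorphism underlying `SurfaceGroup.flipEven`. -/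
noncomputable def flipEvenHom : SurfaceGroup g →* SurfaceGroup g :=
  lift (universal g).flipEven

variable (g) in
/-- The endomorphism underlying `SurfaceGroup.flipOdd`. -/
noncomputable def flipOddHom : SurfaceGroup g →* SurfaceGroup g :=
  lift (universal g).flipOdd

theorem universal_map_flipEvenHom : (universal g).map (flipEvenHom g) = (universal g).flipEven :=
  universal_map_lift _

theorem universal_map_flipOddHom : (universal g).map (flipOddHom g) = (universal g).flipOdd :=
  universal_map_lift _

theorem flipEvenHom_comp_flipEvenHom :
    (flipEvenHom g).comp (flipEvenHom g) = MonoidHom.id _ :=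
  universal_map_injective <| by
    change ((universal g).map (flipEvenHom g)).map (flipEvenHom g) = universal g
    rw [universal_map_flipEvenHom, map_flipEven, universal_map_flipEvenHom, flipEven_flipEven]

theorem flipOddHom_comp_flipOddHom : (flipOddHom g).comp (flipOddHom g) = MonoidHom.id _ :=
  universal_map_injective <| by
    change ((universal g).map (flipOddHom g)).map (flipOddHom g) = universal g
    rw [universal_map_flipOddHom, map_flipOdd, universal_map_flipOddHom, flipOdd_flipOdd]

theorem flipEvenHom_comp_flipOddHom :
    (flipEvenHom g).comp (flipOddHom g) = (flipOddHom g).comp (flipEvenHom g) :=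
  universal_map_injective <| by
    change ((universal g).map (flipOddHom g)).map (flipEvenHom g) =
      ((universal g).map (flipEvenHom g)).map (flipOddHom g)
    rw [universal_map_flipOddHom, universal_map_flipEvenHom, map_flipEven, map_flipOdd,
      universal_map_flipOddHom, universal_map_flipEvenHom, flipEven_flipOdd]

variable (g) in
/-- The involution of the surface group which inverts the even elements of the universal system. -/
noncomputable def flipEven : MulAut (SurfaceGroup g) :=
  (flipEvenHom g).toMulEquiv (flipEvenHom g) flipEvenHom_comp_flipEvenHom
    flipEvenHom_comp_flipEvenHom

variable (g) in
/-- The involution of the surface group which inverts the odd elements of the universal system. -/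
noncomputable def flipOdd : MulAut (SurfaceGroup g) :=
  (flipOddHom g).toMulEquiv (flipOddHom g) flipOddHom_comp_flipOddHom flipOddHom_comp_flipOddHom

theorem flipEven_mul_self : flipEven g * flipEven g = 1 :=
  MulEquiv.ext fun x => DFunLike.congr_fun flipEvenHom_comp_flipEvenHom x

theorem flipOdd_mul_self : flipOdd g * flipOdd g = 1 :=
  MulEquiv.ext fun x => DFunLike.congr_fun flipOddHom_comp_flipOddHom x

theorem flipEven_commute_flipOdd : Commute (flipEven g) (flipOdd g) :=
  MulEquiv.ext fun x => DFunLike.congr_fun flipEvenHom_comp_flipOddHom x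

theorem flipEven_even (j : Fin (g + 1)) :
    flipEven g ((universal g).even j) = ((universal g).even j)⁻¹ :=
  congrFun (congrArg even universal_map_flipEvenHom) j

theorem flipEven_odd (j : Fin (g + 1)) :
    flipEven g ((universal g).odd j) = (universal g).flipEven.odd j :=
  congrFun (congrArg odd universal_map_flipEvenHom) j

theorem flipOdd_even (j : Fin (g + 1)) :
    flipOdd g ((universal g).even j) = (universal g).flipOdd.even j :=
  congrFun (congrArg even universal_map_flipOddHom) j

theorem flipOdd_odd (j : Fin (g + 1)) :
    flipOdd g ((universal g).odd j) = ((universal g).odd j)⁻¹ :=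
  congrFun (congrArg odd universal_map_flipOddHom) j

end SurfaceGroup

/-- The holomorph of a group, that is, its semidirect product with its automorphism group. -/
abbrev Holomorph (Γ : Type*) [Group Γ] : Type _ := Γ ⋊[MonoidHom.id (MulAut Γ)] MulAut Γ

namespace Holomorph

theorem mk_inv_mul_self {x : Γ} {α : MulAut Γ} (hα : α * α = 1) (hx : α x = x⁻¹) :
    (⟨x⁻¹, α⟩ * ⟨x⁻¹, α⟩ : Holomorph Γ) = 1 := by
  ext1
  · simp [hx]
  · simpa using hα

theorem mk_inv_commute {x y : Γ} {α β : MulAut Γ} (hαβ : Commute α β)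
    (hxy : α y * x = β x * y) : Commute (⟨x⁻¹, α⟩ : Holomorph Γ) ⟨y⁻¹, β⟩ := by
  ext1
  · simpa using congrArg Inv.inv hxy
  · exact hαβ

end Holomorph

namespace SurfaceGroup

open EvenOddSystem

/-- The generators of the reflection group of the polygon, in the holomorph of the surface group. -/
noncomputable def reflection : Fin (g + 1) ⊕ Fin (g + 1) → Holomorph (SurfaceGroup g) :=
  Sum.elim (fun j => ⟨((universal g).even j)⁻¹, flipEven g⟩)
    fun j => ⟨((universal g).odd j)⁻¹, flipOdd g⟩

theorem reflection_isLiftable :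
    (rightAngledCoxeterMatrix (polygonGraph g)).IsLiftable reflection := by
  refine isLiftable_of_commute ?_ fun x y hxy => ?_
  · rintro (j | j)
    exacts [Holomorph.mk_inv_mul_self flipEven_mul_self (flipEven_even j),
      Holomorph.mk_inv_mul_self flipOdd_mul_self (flipOdd_odd j)]
  · refine polygonGraph_adj_induction (r := fun x y => Commute (reflection x) (reflection y))
      (fun _ _ => Commute.symm) (fun j => ?_) (fun j => ?_) hxy
    · refine Holomorph.mk_inv_commute flipEven_commute_flipOdd ?_
      rw [flipEven_odd, flipOdd_even, flipEven_odd_mul_even]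
    · refine Holomorph.mk_inv_commute flipEven_commute_flipOdd ?_
      rw [flipEven_odd, flipOdd_even, flipEven_odd_mul_even_add_one]

variable (g) in
/-- The action of the reflection group of the polygon on the surface group by affine maps. -/
noncomputable def toHolomorph :
    RightAngledCoxeterGroup (polygonGraph g) →* Holomorph (SurfaceGroup g) :=
  (system _).lift ⟨reflection, reflection_isLiftable⟩

theorem toHolomorph_simple (x : Fin (g + 1) ⊕ Fin (g + 1)) :
    toHolomorph g ((system _).simple x) = reflection x :=
  (system _).lift_apply_simple reflection_isLiftable x

variable (g) in
/-- The system of products of pairs of the standard generators in the reflection group of the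
polygon. -/
noncomputable def coxeterSystem : EvenOddSystem g (RightAngledCoxeterGroup (polygonGraph g)) :=
  ofReflections (fun j => (system _).simple (Sum.inl j)) (fun j => (system _).simple (Sum.inr j))
    (fun _ => (system _).simple_mul_simple_self _) (fun _ => (system _).simple_mul_simple_self _)
    (fun _ => simple_commute (polygonGraph_adj_inl_inr.mpr (Or.inl rfl)))
    fun _ => simple_commute (polygonGraph_adj_inl_inr.mpr (Or.inr rfl))

theorem coxeterSystem_map_toHolomorph :
    (coxeterSystem g).map (toHolomorph g) = (universal g).map SemidirectProduct.inl := by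
  apply ext_even_odd <;> intro j
  · simp only [coxeterSystem, ofReflections, map_even, map_mul, toHolomorph_simple, reflection,
      Sum.elim_inl]
    ext1
    · simp [(universal g).even_last, flipEven_even]
    · exact flipEven_mul_self
  · simp only [coxeterSystem, ofReflections, map_odd, map_mul, toHolomorph_simple, reflection,
      Sum.elim_inr]
    ext1
    · simp [(universal g).odd_last, flipOdd_odd]
    · exact flipOdd_mul_self

variable (g) in
/-- The embedding of the surface group in the reflection group of the polygon. -/
noncomputable def toRightAngledCoxeterGroup :
    SurfaceGroup g →* RightAngledCoxeterGroup (polygonGraph g) :=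
  lift (coxeterSystem g)

theorem toRightAngledCoxeterGroup_injective :
    Function.Injective (toRightAngledCoxeterGroup g) := by
  have hcomp : (toHolomorph g).comp (toRightAngledCoxeterGroup g) = SemidirectProduct.inl :=
    universal_map_injective <| by
      change ((universal g).map (lift (coxeterSystem g))).map (toHolomorph g) = _
      rw [universal_map_lift, coxeterSystem_map_toHolomorph]
  refine Function.Injective.of_comp (f := toHolomorph g) ?_
  rw [← MonoidHom.coe_comp, hcomp]
  exact SemidirectProduct.inl_injective

end SurfaceGroup

end Embedding

theorem surfaceGens_finite (g : ℕ) : (surfaceGens g).Finite := Set.finite_range _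

theorem closure_surfaceGens (g : ℕ) : Subgroup.closure (surfaceGens g) = ⊤ :=
  PresentedGroup.closure_range_of _

section Main

universe u

open RightAngledCoxeterGroup

theorem IsPolynomiallySeparable.exists_finite_quotient {Γ : Type u} [Group Γ] {X : Set Γ}
    {Δ : Subgroup Γ} (hΔ : IsPolynomiallySeparable X Δ) :
    ∃ C D : ℝ, 0 < C ∧ 0 < D ∧
      ∀ γ : Γ, γ ∉ Δ →
        ∃ (Q : Type u) (_ : Group Q) (_ : Fintype Q) (φ : Γ →* Q),
          φ γ ∉ Δ.map φ ∧
          (Fintype.card Q : ℝ) ≤ C * (wordNorm X γ : ℝ) ^ D ∧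
          Δ ≤ Δ ⊔ φ.ker ∧
          γ ∉ Δ ⊔ φ.ker ∧
          (Δ ⊔ φ.ker).index ≤ Fintype.card Q ∧
          (Δ ⊔ φ.ker).normalCore.index ≤ Fintype.card Q := by
  obtain ⟨C, D, hC, hD, hsep⟩ := hΔ
  refine ⟨C, D, Nat.cast_pos.mpr hC, Nat.cast_pos.mpr hD, fun γ hγ => ?_⟩
  obtain ⟨N, hN, hfin, hγN, hindex⟩ := hsep γ hγ
  have : Fintype (Γ ⧸ N) := Fintype.ofFinite _
  have hcard : Fintype.card (Γ ⧸ N) = N.index := by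
    rw [Subgroup.index_eq_card, Nat.card_eq_fintype_card]
  refine ⟨Γ ⧸ N, inferInstance, inferInstance, QuotientGroup.mk' N,
    notMem_map_mk'_of_notMem_sup hγN, ?_, le_sup_left, ?_⟩
  · rw [hcard, Real.rpow_natCast]
    exact_mod_cast hindex
  · rw [QuotientGroup.ker_mk', hcard]
    exact ⟨hγN, Subgroup.index_antitone le_sup_right,
      Subgroup.index_antitone (Subgroup.normal_le_normalCore.mpr le_sup_right)⟩

variable {B : Type*} {G : SimpleGraph B}

theorem exists_length_le_mul_wordNorm {Γ : Type*} [Group Γ] {X : Set Γ} (hX : X.Finite)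
    (hclosure : Subgroup.closure X = ⊤) (f : Γ →* RightAngledCoxeterGroup G) :
    ∃ c : ℕ, ∀ γ, (system G).length (f γ) ≤ c * wordNorm X γ := by
  obtain ⟨c, hc⟩ := ((hX.union hX.inv).image fun x => (system G).length (f x)).bddAbove
  refine ⟨c, le_mul_wordNorm_of_subadditive hclosure ?_ (fun x y => ?_)
    fun x hx => hc (Set.mem_image_of_mem _ hx)⟩
  · rw [map_one, (system G).length_one]
  · rw [map_mul]
    exact (system G).length_mul_le _ _

theorem abs_geometricRep_apply_le_two_pow [Fintype B] [DecidableEq B]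
    {w : RightAngledCoxeterGroup G} {n : ℕ} (hw : (system G).length w ≤ n) (i j : B) :
    |geometricRep G w i j| ≤ 2 ^ (2 * n) :=
  calc |geometricRep G w i j| ≤ 3 ^ (system G).length w := abs_geometricRep_apply_le w i j
    _ ≤ 4 ^ n := (pow_le_pow_left₀ (by norm_num) (by norm_num) _).trans
        (pow_le_pow_right₀ (by norm_num) hw)
    _ = 2 ^ (2 * n) := by rw [pow_mul]; norm_num

theorem isPolynomiallySeparable_of_injective [Finite B] (hG : G.Preconnected)
    (hdeg : ∀ s, (G.neighborSet s).ncard ≤ 2) (hB : 5 ≤ Nat.card B) {Γ : Type*} [Group Γ]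
    {X : Set Γ} (hX : X.Finite) (hclosure : Subgroup.closure X = ⊤)
    {f : Γ →* RightAngledCoxeterGroup G} (hf : Function.Injective f) {Δ : Subgroup Γ}
    (hΔ : Δ.FG) : IsPolynomiallySeparable X Δ := by
  classical
  have : Fintype B := Fintype.ofFinite B
  obtain ⟨K, r, hK, hΔK, hfix, hlen⟩ := exists_virtual_retraction hG hdeg hB (fg_map f hΔ)
  obtain ⟨c, hc⟩ := exists_length_le_mul_wordNorm hX hclosure f
  have := finiteIndex_comap f K
  let ρ₁ : K.comap f →* Matrix B B ℤ := (geometricRep G).comp (f.comp (K.comap f).subtype)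
  let ρ₂ : K.comap f →* Matrix B B ℤ := (geometricRep G).comp (r.comp (f.subgroupComap K))
  refine isPolynomiallySeparable_of_eq_iff (K := K.comap f) (ρ₁ := ρ₁) (ρ₂ := ρ₂) (c := 2 * c)
    hclosure (Subgroup.map_le_iff_le_comap.mp hΔK) (fun k => ?_) (fun k => ?_) (fun k => ?_)
  · calc (k : Γ) ∈ Δ ↔ f k ∈ Δ.map f := (Subgroup.mem_map_iff_mem hf).symm
      _ ↔ r (f.subgroupComap K k) = f k := hfix (f.subgroupComap K k)
      _ ↔ ρ₁ k = ρ₂ k := by rw [eq_comm]; exact geometricRep_injective.eq_iff.symm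
  · rw [mul_assoc]
    exact abs_geometricRep_apply_le_two_pow (hc k)
  · rw [mul_assoc]
    exact abs_geometricRep_apply_le_two_pow ((hlen _).trans (hc k))

end Main

end EffectiveSeparability

open EffectiveSeparability

universe u

theorem surface_effective_separability_general {B : Type*} [Finite B] {G : SimpleGraph B}
    (hG : G.Preconnected) (hdeg : ∀ s, (G.neighborSet s).ncard ≤ 2) (hB : 5 ≤ Nat.card B)
    {Γ : Type u} [Group Γ] {X : Set Γ} (hX : X.Finite) (hclosure : Subgroup.closure X = ⊤)
    {f : Γ →* RightAngledCoxeterGroup G} (hf : Function.Injective f) (Δ : Subgroup Γ)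
    (hΔ : Δ.FG) :
    ∃ C D : ℝ, 0 < C ∧ 0 < D ∧
      ∀ γ : Γ, γ ∉ Δ →
        ∃ (Q : Type u) (_ : Group Q) (_ : Fintype Q) (φ : Γ →* Q),
          φ γ ∉ Δ.map φ ∧
          (Fintype.card Q : ℝ) ≤ C * (wordNorm X γ : ℝ) ^ D ∧
          Δ ≤ Δ ⊔ φ.ker ∧
          γ ∉ Δ ⊔ φ.ker ∧
          (Δ ⊔ φ.ker).index ≤ Fintype.card Q ∧
          (Δ ⊔ φ.ker).normalCore.index ≤ Fintype.card Q :=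
  (isPolynomiallySeparable_of_injective hG hdeg hB hX hclosure hf hΔ).exists_finite_quotient

/-- Corollary 1.2 (surface case): finitely generated subgroups of the genus-`g` surface
group, `g ≥ 2`, can be separated by finite quotients of size polynomial in the word
length, with the same bound for the index of the separating subgroup and of its normal
core. -/
theorem surface_effective_separability (g : ℕ) (hg : 2 ≤ g)
    (Δ₀ : Subgroup (SurfaceGroup g)) (hΔ₀ : Δ₀.FG) :
    ∃ C D : ℝ, 0 < C ∧ 0 < D ∧
      ∀ γ : SurfaceGroup g, γ ∉ Δ₀ →
        ∃ (Q : Type) (_ : Group Q) (_ : Fintype Q) (φ : SurfaceGroup g →* Q),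
          φ γ ∉ Δ₀.map φ ∧
          (Fintype.card Q : ℝ) ≤ C * (wordNorm (surfaceGens g) γ : ℝ) ^ D ∧
          Δ₀ ≤ Δ₀ ⊔ φ.ker ∧
          γ ∉ Δ₀ ⊔ φ.ker ∧
          (Δ₀ ⊔ φ.ker).index ≤ Fintype.card Q ∧
          (Δ₀ ⊔ φ.ker).normalCore.index ≤ Fintype.card Q := by
  exact surface_effective_separability_general polygonGraph_preconnected
    polygonGraph_ncard_neighborSet_le (five_le_card_polygon hg) (surfaceGens_finite g)
    (closure_surfaceGens g) SurfaceGroup.toRightAngledCoxeterGroup_injective Δ₀ hΔ₀
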